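/- arXiv:2511.19309 — 2 statements merged into one kernel-verified Lean document; each statement's English description precedes it below -/
import Mathlib

section
/- Let 𝒫 be a generalized perimeter, L > 0, R > 0, E₀ ∈ 𝔠_L ∩ 𝔐_R, and let {E^0_t}_{t ≥ 0} be a flat flow with initial datum E₀ along a vanishing sequence {h_k} of time steps. Then the flat flow satisfies the semigroup property: for every t̄ ≥ 0 and Δt ≥ 0, the approximate flat solutions with initial datum E^0_{t̄} and time steps h_k converge at time Δt to E^0_{t̄+Δt}, i.e. |E^{(h_k)}_{Δt}[E^0_{t̄}] Δ E^0_{t̄+Δt}| → 0 as k → ∞. -/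
open MeasureTheory Filter Set
open scoped ENNReal

noncomputable section

/-- The flat torus `𝕋^{d-1}`. -/
abbrev Torus (d : ℕ) : Type := Fin (d-1) → AddCircle (1:ℝ)

/-- The periodic strip `𝕋^{d-1} × ℝ`. -/
abbrev Cyl (d : ℕ) : Type := Torus d × ℝ

/-- The subgraph of a function `g : 𝕋^{d-1} → ℝ`. -/
def subgraph (d : ℕ) (g : Torus d → ℝ) : Set (Cyl d) := {x | x.2 ≤ g x.1}

/-- The class `𝔠_L` of periodic `L`-Lipschitz subgraphs. -/
def LipClass (d : ℕ) (L : ℝ) : Set (Set (Cyl d)) :=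
  {E | ∃ g : Torus d → ℝ, LipschitzWith (Real.toNNReal L) g ∧ E = subgraph d g}

/-- The slab `𝕊^d_R = 𝕋^{d-1} × (-R, R)`. -/
def SlabR (d : ℕ) (R : ℝ) : Set (Cyl d) := {x | -R < x.2 ∧ x.2 < R}

/-- The class `𝔐_R` of measurable sets squeezed between two halfspaces. -/
def MR (d : ℕ) (R : ℝ) : Set (Set (Cyl d)) :=
  {E | MeasurableSet E ∧ {x : Cyl d | x.2 < -R} ⊆ E ∧ E ⊆ {x : Cyl d | x.2 < R}}

/-- The periodic halfspace `H_λ = 𝕋^{d-1} × (-∞, λ)`. -/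
def halfspace (d : ℕ) (lam : ℝ) : Set (Cyl d) := {x | x.2 < lam}

/-- Translation of `𝕋^{d-1} × ℝ` by a vector `τ ∈ ℝ^d = ℝ^{d-1} × ℝ`,
acting through the quotient. -/
def translCyl (d : ℕ) (τ : (Fin (d-1) → ℝ) × ℝ) (x : Cyl d) : Cyl d :=
  (fun i => x.1 i + (τ.1 i : AddCircle (1:ℝ)), x.2 + τ.2)

/-- A generalized perimeter: a functional `𝒫 : 𝔐 → [0,+∞]` satisfying properties
(i)-(vi) of Definition 1.2. -/
structure GenPerimeter (d : ℕ) where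
  P : Set (Cyl d) → ℝ≥0∞
  /-- (i) finiteness on periodic Lipschitz subgraphs -/
  lip_finite : ∀ L : ℝ, 0 < L → ∀ E ∈ LipClass d L, P E < ⊤
  /-- (ii) `𝒫(∅) = 0` -/
  empty_eq : P ∅ = 0
  /-- (ii) `𝒫(𝕋^{d-1} × ℝ) = 0` -/
  univ_eq : P Set.univ = 0
  /-- (iii) invariance under modifications on null sets -/
  congr_ae : ∀ E E' : Set (Cyl d), volume (symmDiff E E') = 0 → P E = P E'
  /-- (iv) lower semicontinuity w.r.t. local `L¹` convergence -/
  lsc : ∀ (En : ℕ → Set (Cyl d)) (E : Set (Cyl d)),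
      (∀ R : ℝ, 0 < R →
        Tendsto (fun n => volume (symmDiff (En n) E ∩ SlabR d R)) atTop (nhds 0)) →
      P E ≤ liminf (fun n => P (En n)) atTop
  /-- (v) submodularity -/
  submodular : ∀ E F : Set (Cyl d), P (E ∪ F) + P (E ∩ F) ≤ P E + P F
  /-- (vi) translational invariance -/
  transl_inv : ∀ (E : Set (Cyl d)) (τ : (Fin (d-1) → ℝ) × ℝ), P (translCyl d τ '' E) = P E

/-- Signed distance from a set `E`. -/
def sdist (d : ℕ) (E : Set (Cyl d)) (x : Cyl d) : ℝ :=
  Metric.infDist x E - Metric.infDist x Eᶜ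

/-- The incremental functional `𝓕̃_h(E, F) = 𝒫(F) + (1/h) ∫_{F ∩ 𝕊^d_R} sdist_E`. -/
def Ftilde (d : ℕ) (P : GenPerimeter d) (R h : ℝ) (E F : Set (Cyl d)) : EReal :=
  (P.P F : EReal) + (((1/h) * ∫ x in F ∩ SlabR d R, sdist d E x) : ℝ)

/-- `F` minimizes `𝓕̃_h(E, ·)` in `𝔐_R`. -/
def IsMinimizer (d : ℕ) (P : GenPerimeter d) (R h : ℝ) (E F : Set (Cyl d)) : Prop :=
  F ∈ MR d R ∧ ∀ F' ∈ MR d R, Ftilde d P R h E F ≤ Ftilde d P R h E F'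

/-- The discrete-in-time approximate flat solution with time step `h`, initial datum `E₀`:
`Eh k` is the set at time `k h`; each step is the (unique, Lipschitz-subgraph) minimizer of
the incremental problem. -/
def IsApproxFlow (d : ℕ) (P : GenPerimeter d) (L R h : ℝ) (E₀ : Set (Cyl d))
    (Eh : ℕ → Set (Cyl d)) : Prop :=
  Eh 0 = E₀ ∧ ∀ k : ℕ, Eh (k+1) ∈ LipClass d L ∧ IsMinimizer d P R h (Eh k) (Eh (k+1))

/-- A flat flow `E0` with initial datum `E₀` along the vanishing sequence `hk` of time steps:
`Eflow k` is the approximate flat solution with time step `hk k`, and for every `t ≥ 0` the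
approximate solutions at time `t` converge in measure to `E0 t ∈ 𝔠_L`. -/
def IsFlatFlow (d : ℕ) (P : GenPerimeter d) (L R : ℝ) (hk : ℕ → ℝ) (E₀ : Set (Cyl d))
    (Eflow : ℕ → ℕ → Set (Cyl d)) (E0 : ℝ → Set (Cyl d)) : Prop :=
  E0 0 = E₀ ∧ (∀ t : ℝ, 0 ≤ t → E0 t ∈ LipClass d L) ∧
  (∀ k, IsApproxFlow d P L R (hk k) E₀ (Eflow k)) ∧
  (∀ t : ℝ, 0 ≤ t →
    Tendsto (fun k => volume (symmDiff (Eflow k ⌊t / hk k⌋₊) (E0 t))) atTop (nhds 0))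

/-!
The minimization step is a contraction for the sup distance: if `g ≤ g' + ε`, then for every `δ > 0`
the subgraph of `g` moved down by `ε + δ` has strictly larger signed distance than that of `g'`, and
by submodularity and translation invariance of the perimeter the minimizer for `g` moved down by
`ε + δ` lies in the one for `g'`. Hence no step of an approximate solution is longer than its first
one, which tends to `0` with `h` because the energy inequality gives
`∫_{A Δ E} |sdist_E| ≤ h 𝒫(E)` for a minimizer `A`.

As `⌊(t̄ + Δt) / h⌋` and `⌊t̄ / h⌋ + ⌊Δt / h⌋` differ by at most one, contraction bounds the
distance between the solution started at `E0 t̄` and the original one by the distance from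
`E0 t̄` to its approximation plus the length of one step. For `L`-Lipschitz subgraphs
convergence in measure is uniform convergence of the graphs.
-/

variable {d : ℕ}

/-! ### Signed distance under strict inclusion -/

/-- The distances of `X` can be split exactly, as along a minimizing geodesic. Normed spaces have
this property (`exists_dist_le_le`), and it passes to circles and products, hence to `Cyl d`. -/
def DistSplits (X : Type*) [PseudoMetricSpace X] : Prop :=
  ∀ ⦃x z : X⦄ ⦃δ ε : ℝ⦄, 0 ≤ δ → 0 ≤ ε → dist x z ≤ ε + δ → ∃ y, dist x y ≤ δ ∧ dist y z ≤ ε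

namespace DistSplits

lemma addCircle (p : ℝ) : DistSplits (AddCircle p) := by
  intro x z δ ε hδ hε hxz
  obtain ⟨a, rfl⟩ := QuotientAddGroup.mk_surjective x
  obtain ⟨b, rfl⟩ := QuotientAddGroup.mk_surjective z
  set n : ℤ := round (p⁻¹ * (a - b))
  have hb : ((b + n * p : ℝ) : AddCircle p) = b := by
    rw [← zsmul_eq_mul]; simp
  have hdist_coe : ∀ u v : ℝ, dist (u : AddCircle p) v ≤ dist u v := fun u v ↦ by
    rw [dist_eq_norm, dist_eq_norm, ← AddCircle.coe_sub]
    exact QuotientAddGroup.norm_mk_le_norm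
  have hab : dist a (b + n * p) ≤ ε + δ := by
    rwa [dist_eq_norm, ← QuotientAddGroup.mk_sub, AddCircle.norm_eq, sub_sub,
      ← Real.dist_eq] at hxz
  obtain ⟨c, hac, hcb⟩ := exists_dist_le_le hδ hε hab
  refine ⟨c, (hdist_coe a c).trans hac, ?_⟩
  change dist (c : AddCircle p) (b : AddCircle p) ≤ ε
  exact hb ▸ (hdist_coe c _).trans hcb

lemma pi {ι : Type*} [Fintype ι] {X : ι → Type*} [∀ i, PseudoMetricSpace (X i)]
    (hX : ∀ i, DistSplits (X i)) : DistSplits (∀ i, X i) := by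
  intro x z δ ε hδ hε hxz
  choose y hxy hyz using fun i ↦ hX i hδ hε ((dist_le_pi_dist x z i).trans hxz)
  exact ⟨y, (dist_pi_le_iff hδ).2 hxy, (dist_pi_le_iff hε).2 hyz⟩

lemma prod {X Y : Type*} [PseudoMetricSpace X] [PseudoMetricSpace Y] (hX : DistSplits X)
    (hY : DistSplits Y) : DistSplits (X × Y) := by
  intro x z δ ε hδ hε hxz
  obtain ⟨hxz₁, hxz₂⟩ := max_le_iff.1 (Prod.dist_eq.symm.trans_le hxz)
  obtain ⟨y₁, hxy₁, hyz₁⟩ := hX hδ hε hxz₁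
  obtain ⟨y₂, hxy₂, hyz₂⟩ := hY hδ hε hxz₂
  exact ⟨(y₁, y₂), max_le hxy₁ hxy₂, max_le hyz₁ hyz₂⟩

lemma cyl : DistSplits (Cyl d) :=
  prod (pi fun _ ↦ addCircle 1) fun _ _ _ _ hδ hε hxz ↦ exists_dist_le_le hδ hε hxz

lemma infDist_add_le {X : Type*} [PseudoMetricSpace X] (hX : DistSplits X) {E F : Set X} {η : ℝ}
    (hη : 0 ≤ η) (hE : E.Nonempty) (hsep : ∀ z ∈ E, ∀ y ∉ F, η < dist z y) {x : X} (hx : x ∉ F) :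
    Metric.infDist x F + η ≤ Metric.infDist x E := by
  refine (Metric.le_infDist hE).2 fun z hz ↦ ?_
  have hηz : η < dist x z := dist_comm x z ▸ hsep z hz x hx
  obtain ⟨w, hxw, hwz⟩ := hX (sub_nonneg.2 hηz.le) hη (add_sub_cancel η (dist x z)).ge
  have hwF : w ∈ F := by
    by_contra hwF
    exact (hsep z hz w hwF).not_ge (dist_comm w z ▸ hwz)
  linarith [Metric.infDist_le_dist_of_mem (x := x) hwF]

end DistSplits

lemma continuous_sdist (E : Set (Cyl d)) : Continuous (sdist d E) :=
  (Metric.continuous_infDist_pt _).sub (Metric.continuous_infDist_pt _)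

lemma sdist_of_mem {E : Set (Cyl d)} {x : Cyl d} (hx : x ∈ E) :
    sdist d E x = -Metric.infDist x Eᶜ := by
  rw [sdist, Metric.infDist_zero_of_mem hx, zero_sub]

lemma sdist_of_notMem {E : Set (Cyl d)} {x : Cyl d} (hx : x ∉ E) :
    sdist d E x = Metric.infDist x E := by
  rw [sdist, Metric.infDist_zero_of_mem (s := Eᶜ) hx, sub_zero]

lemma sdist_add_le_sdist {E F : Set (Cyl d)} {η : ℝ} (hη : 0 ≤ η) (hE : E.Nonempty)
    (hF : Fᶜ.Nonempty) (hsep : ∀ z ∈ E, ∀ y ∉ F, η < dist z y) (x : Cyl d) :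
    sdist d F x + η ≤ sdist d E x := by
  have hEF : E ⊆ F := fun z hz ↦ by
    by_contra hzF
    exact (hsep z hz z hzF).not_ge (dist_self z ▸ hη)
  by_cases hxF : x ∈ F
  · by_cases hxE : x ∈ E
    · have := DistSplits.cyl.infDist_add_le hη hF (F := Eᶜ)
        (fun y hy z hz ↦ dist_comm z y ▸ hsep z (not_not.1 hz) y hy) (not_not.2 hxE)
      rw [sdist_of_mem hxF, sdist_of_mem hxE]
      linarith
    · have hdist : η - Metric.infDist x Fᶜ ≤ Metric.infDist x E := by
        refine (Metric.le_infDist hE).2 fun z hz ↦ sub_le_comm.1 ?_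
        refine (Metric.le_infDist hF).2 fun y hy ↦ ?_
        linarith [hsep z hz y hy, dist_triangle_left z y x]
      rw [sdist_of_mem hxF, sdist_of_notMem hxE]
      linarith
  · rw [sdist_of_notMem hxF, sdist_of_notMem fun hxE ↦ hxF (hEF hxE)]
    exact DistSplits.cyl.infDist_add_le hη hE hsep hxF

/-! ### Vertical translations -/

lemma translCyl_eq_add (τ : (Fin (d - 1) → ℝ) × ℝ) :
    translCyl d τ = (· + ((fun i ↦ (τ.1 i : AddCircle (1 : ℝ)), τ.2) : Cyl d)) := rfl

lemma translCyl_vertical_apply (c : ℝ) (x : Cyl d) : translCyl d (0, c) x = (x.1, x.2 + c) := by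
  simp [translCyl]

lemma isometry_translCyl (τ : (Fin (d - 1) → ℝ) × ℝ) : Isometry (translCyl d τ) := by
  rw [translCyl_eq_add]
  exact Isometry.of_dist_eq fun x y ↦ dist_add_right x y _

lemma bijective_translCyl (τ : (Fin (d - 1) → ℝ) × ℝ) : Function.Bijective (translCyl d τ) :=
  translCyl_eq_add τ ▸ (Equiv.addRight _).bijective

lemma sdist_preimage_translCyl (τ : (Fin (d - 1) → ℝ) × ℝ) (E : Set (Cyl d)) (x : Cyl d) :
    sdist d (translCyl d τ ⁻¹' E) x = sdist d E (translCyl d τ x) := by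
  have hinfDist (S : Set (Cyl d)) :
      Metric.infDist x (translCyl d τ ⁻¹' S) = Metric.infDist (translCyl d τ x) S := by
    rw [← Metric.infDist_image (isometry_translCyl τ),
      image_preimage_eq S (bijective_translCyl τ).surjective]
  rw [sdist, ← preimage_compl, hinfDist, hinfDist, sdist]

instance isAddHaarMeasure_volume_cyl :
    Measure.IsAddHaarMeasure (volume : Measure (Cyl d)) :=
  haveI : Measure.IsAddHaarMeasure (volume : Measure (Torus d)) :=
    inferInstanceAs (Measure.IsAddHaarMeasure
      (Measure.pi fun _ : Fin (d - 1) ↦ (volume : Measure (AddCircle (1 : ℝ)))))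
  Measure.prod.instIsAddHaarMeasure _ _

lemma measurePreserving_translCyl (τ : (Fin (d - 1) → ℝ) × ℝ) :
    MeasurePreserving (translCyl d τ) :=
  translCyl_eq_add τ ▸ measurePreserving_add_right volume _

lemma measurableEmbedding_translCyl (τ : (Fin (d - 1) → ℝ) × ℝ) :
    MeasurableEmbedding (translCyl d τ) :=
  translCyl_eq_add τ ▸ (MeasurableEquiv.addRight _).measurableEmbedding

/-! ### Subgraphs of Lipschitz functions -/

/-- The signed vertical distance from `x` to the graph of `g`, nonpositive exactly on
`subgraph d g`. -/
def height (g : Torus d → ℝ) (x : Cyl d) : ℝ := x.2 - g x.1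

lemma mem_subgraph_iff_height {g : Torus d → ℝ} {x : Cyl d} :
    x ∈ subgraph d g ↔ height g x ≤ 0 :=
  sub_nonpos (a := x.2).symm

lemma notMem_subgraph_iff_height {g : Torus d → ℝ} {x : Cyl d} :
    x ∉ subgraph d g ↔ 0 < height g x := by
  rw [mem_subgraph_iff_height, not_le]

lemma lipschitzWith_height {K : NNReal} {g : Torus d → ℝ} (hg : LipschitzWith K g) :
    LipschitzWith (1 + K) (height g) := by
  have := LipschitzWith.prod_snd.sub (hg.comp LipschitzWith.prod_fst)
  rwa [mul_one] at this

lemma abs_height_sub_height_le {K : NNReal} {g : Torus d → ℝ} (hg : LipschitzWith K g)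
    (x y : Cyl d) : |height g x - height g y| ≤ (1 + K) * dist x y := by
  simpa [Real.dist_eq] using (lipschitzWith_height hg).dist_le_mul x y

lemma subgraph_nonempty (g : Torus d → ℝ) : (subgraph d g).Nonempty :=
  ⟨(0, g 0), le_refl (g 0)⟩

lemma compl_subgraph_nonempty (g : Torus d → ℝ) : (subgraph d g)ᶜ.Nonempty :=
  ⟨(0, g 0 + 1), not_le.2 (lt_add_one (g 0))⟩

lemma preimage_translCyl_subgraph (c : ℝ) (g : Torus d → ℝ) :
    translCyl d (0, c) ⁻¹' subgraph d g = subgraph d fun y ↦ g y - c := by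
  ext x
  rw [mem_preimage, translCyl_vertical_apply]
  exact (le_sub_iff_add_le (a := x.2)).symm

lemma sdist_subgraph_add_le {K : NNReal} {f g : Torus d → ℝ} (hg : LipschitzWith K g) {δ : ℝ}
    (hδ : 0 ≤ δ) (hfg : ∀ y, f y + δ ≤ g y) (x : Cyl d) :
    sdist d (subgraph d g) x + δ / (1 + K) ≤ sdist d (subgraph d f) x := by
  refine sdist_add_le_sdist (by positivity) (subgraph_nonempty f) (compl_subgraph_nonempty g)
    (fun z hz y hy ↦ ?_) x
  have hz' : height g z ≤ -δ := by
    have : z.2 ≤ f z.1 := hz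
    unfold height
    linarith [hfg z.1]
  rw [div_lt_iff₀' (by positivity), dist_comm]
  linarith [notMem_subgraph_iff_height.1 hy, le_abs_self (height g y - height g z),
    abs_height_sub_height_le hg y z]

lemma abs_height_le_mul_abs_sdist {K : NNReal} {g : Torus d → ℝ} (hg : LipschitzWith K g)
    (x : Cyl d) : |height g x| ≤ (1 + K) * |sdist d (subgraph d g) x| := by
  have hK : (0 : ℝ) < 1 + K := by positivity
  rw [← div_le_iff₀' hK]
  by_cases hx : x ∈ subgraph d g
  · rw [sdist_of_mem hx, abs_neg]
    refine ((Metric.le_infDist (compl_subgraph_nonempty g)).2 fun z hz ↦ ?_).trans (le_abs_self _)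
    rw [div_le_iff₀' hK, abs_of_nonpos (mem_subgraph_iff_height.1 hx)]
    linarith [notMem_subgraph_iff_height.1 hz, neg_abs_le (height g x - height g z),
      abs_height_sub_height_le hg x z]
  · rw [sdist_of_notMem hx]
    refine ((Metric.le_infDist (subgraph_nonempty g)).2 fun z hz ↦ ?_).trans (le_abs_self _)
    rw [div_le_iff₀' hK, abs_of_pos (notMem_subgraph_iff_height.1 hx)]
    linarith [mem_subgraph_iff_height.1 hz, le_abs_self (height g x - height g z),
      abs_height_sub_height_le hg x z]

/-! ### Energy comparison for minimizers -/

lemma volume_setOf_snd_eq (c : ℝ) : volume {x : Cyl d | x.2 = c} = 0 := by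
  have : {x : Cyl d | x.2 = c} = univ ×ˢ {c} := by ext; simp
  rw [this, Measure.volume_eq_prod, Measure.prod_prod, Real.volume_singleton, mul_zero]

section Slab

variable {R : ℝ} {A F : Set (Cyl d)}

lemma sdiff_inter_slabR_ae_eq (hA : A ⊆ {x | x.2 < R}) (hF : {x | x.2 < -R} ⊆ F) :
    (A \ F ∩ SlabR d R : Set (Cyl d)) =ᵐ[volume] (A \ F : Set (Cyl d)) := by
  have hne : ∀ᵐ x : Cyl d, x.2 ≠ -R := measure_eq_zero_iff_ae_notMem.1 (volume_setOf_snd_eq (-R))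
  filter_upwards [hne] with x hx
  refine propext ⟨And.left, fun hxD ↦ ⟨hxD, ?_, hA hxD.1⟩⟩
  exact (not_lt.1 fun hlt ↦ hxD.2 (hF hlt)).lt_of_ne' hx

lemma integrableOn_slabR {φ : Cyl d → ℝ} (hφ : Continuous φ) (R : ℝ) :
    IntegrableOn φ (SlabR d R) :=
  (hφ.continuousOn.integrableOn_compact (isCompact_univ.prod (isCompact_Icc (a := -R) (b := R))))
    |>.mono_set fun _ hx ↦ ⟨mem_univ _, hx.1.le, hx.2.le⟩

lemma integrableOn_sdiff {φ : Cyl d → ℝ} (hφ : Continuous φ) (hA : A ⊆ {x | x.2 < R})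
    (hF : {x | x.2 < -R} ⊆ F) : IntegrableOn φ (A \ F) :=
  ((integrableOn_slabR hφ R).mono_set inter_subset_right).congr_set_ae
    (sdiff_inter_slabR_ae_eq hA hF).symm

lemma setIntegral_inter_slabR {φ : Cyl d → ℝ} (hφ : Continuous φ) (hA : A ⊆ {x | x.2 < R})
    (hFR : F ∈ MR d R) :
    ∫ x in A ∩ SlabR d R, φ x =
      (∫ x in A ∩ F ∩ SlabR d R, φ x) + ∫ x in A \ F, φ x := by
  have hsdiff : (A \ F ∩ SlabR d R : Set (Cyl d)) = (A ∩ SlabR d R) \ F := by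
    rw [sdiff_eq, sdiff_eq, inter_right_comm]
  rw [← setIntegral_congr_set (sdiff_inter_slabR_ae_eq hA hFR.2.1), inter_right_comm, hsdiff,
    integral_inter_add_sdiff hFR.1
      ((integrableOn_slabR hφ R).mono_set inter_subset_right)]

end Slab

namespace IsMinimizer

variable {P : GenPerimeter d} {R h : ℝ} {E A F G : Set (Cyl d)}

lemma toReal_add_setIntegral_le (hA : IsMinimizer d P R h E A) (hF : F ∈ MR d R)
    (hPA : P.P A ≠ ⊤) (hPF : P.P F ≠ ⊤) :
    (P.P A).toReal + (1 / h) * ∫ x in A \ F, sdist d E x ≤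
      (P.P F).toReal + (1 / h) * ∫ x in F \ A, sdist d E x := by
  have hle := hA.2 F hF
  rw [Ftilde, Ftilde, ← EReal.coe_ennreal_toReal hPA, ← EReal.coe_ennreal_toReal hPF,
    ← EReal.coe_add, ← EReal.coe_add, EReal.coe_le_coe_iff,
    setIntegral_inter_slabR (continuous_sdist E) hA.1.2.2 hF,
    setIntegral_inter_slabR (continuous_sdist E) hF.2.2 hA.1, inter_comm F A, mul_add,
    mul_add] at hle
  linarith

lemma toReal_add_setIntegral_le_inter (hA : IsMinimizer d P R h E A) (hF : MeasurableSet F)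
    (hFR : {x | x.2 < -R} ⊆ F) (hPA : P.P A ≠ ⊤) (hPF : P.P (A ∩ F) ≠ ⊤) :
    (P.P A).toReal + (1 / h) * ∫ x in A \ F, sdist d E x ≤ (P.P (A ∩ F)).toReal := by
  simpa [sdiff_eq_empty.2 (inter_subset_left : A ∩ F ⊆ A)] using
    hA.toReal_add_setIntegral_le (F := A ∩ F) ⟨hA.1.1.inter hF,
    subset_inter hA.1.2.1 hFR, inter_subset_left.trans hA.1.2.2⟩ hPA hPF

lemma toReal_le_union_add_setIntegral (hA : IsMinimizer d P R h E A) (hG : MeasurableSet G)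
    (hGR : G ⊆ {x | x.2 < R}) (hPA : P.P A ≠ ⊤) (hPG : P.P (G ∪ A) ≠ ⊤) :
    (P.P A).toReal ≤ (P.P (G ∪ A)).toReal + (1 / h) * ∫ x in G \ A, sdist d E x := by
  simpa [sdiff_eq_empty.2 (subset_union_right : A ⊆ G ∪ A)] using
    hA.toReal_add_setIntegral_le (F := G ∪ A) ⟨hG.union hA.1.1,
    hA.1.2.1.trans subset_union_right, union_subset hGR hA.1.2.2⟩ hPA hPG

lemma setIntegral_abs_sdist_le (hA : IsMinimizer d P R h E A) (hh : 0 < h) (hE : E ∈ MR d R)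
    (hPA : P.P A ≠ ⊤) (hPE : P.P E ≠ ⊤) :
    ∫ x in symmDiff A E, |sdist d E x| ≤ h * (P.P E).toReal := by
  have habs := (continuous_sdist E).abs
  have hAE : ∫ x in A \ E, |sdist d E x| = ∫ x in A \ E, sdist d E x :=
    setIntegral_congr_fun (hA.1.1.diff hE.1) fun x hx ↦ by
      simp only [sdist_of_notMem hx.2, abs_of_nonneg Metric.infDist_nonneg]
  have hEA : ∫ x in E \ A, |sdist d E x| = -∫ x in E \ A, sdist d E x := by
    rw [← integral_neg]
    exact setIntegral_congr_fun (hE.1.diff hA.1.1) fun x hx ↦ by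
      simp only [sdist_of_mem hx.1, abs_neg, neg_neg, abs_of_nonneg Metric.infDist_nonneg]
  rw [Set.symmDiff_def, setIntegral_union disjoint_sdiff_sdiff (hE.1.diff hA.1.1)
    (integrableOn_sdiff habs hA.1.2.2 hE.2.1) (integrableOn_sdiff habs hE.2.2 hA.1.2.1), hAE, hEA,
    ← inv_mul_le_iff₀ hh, ← one_div]
  linarith [hA.toReal_add_setIntegral_le hE hPA hPE, (P.P A).toReal_nonneg]

end IsMinimizer

lemma measure_eq_zero_of_setIntegral_le {X : Type*} [MeasurableSpace X] {μ : Measure X}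
    {D : Set X} {φ ψ : X → ℝ} (hφ : IntegrableOn φ D μ) (hψ : IntegrableOn ψ D μ)
    (hlt : ∀ x, φ x < ψ x) (hle : ∫ x in D, ψ x ∂μ ≤ ∫ x in D, φ x ∂μ) : μ D = 0 := by
  by_contra hD
  have hpos : 0 < ∫ x in D, (ψ x - φ x) ∂μ := by
    rw [setIntegral_pos_iff_support_of_nonneg_ae
      (Eventually.of_forall fun x ↦ (sub_pos.2 (hlt x)).le) (hψ.sub hφ),
      eq_univ_of_forall (s := Function.support fun x ↦ ψ x - φ x)
        fun x ↦ (sub_pos.2 (hlt x)).ne', univ_inter]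
    exact pos_iff_ne_zero.2 hD
  rw [integral_sub hψ hφ] at hpos
  linarith

lemma GenPerimeter.preimage_union_add_inter_image_le (P : GenPerimeter d)
    (τ : (Fin (d - 1) → ℝ) × ℝ) (A B : Set (Cyl d)) :
    P.P (translCyl d τ ⁻¹' A ∪ B) + P.P (A ∩ translCyl d τ '' B) ≤ P.P A + P.P B := by
  have hunion : P.P (translCyl d τ ⁻¹' A ∪ B) = P.P (A ∪ translCyl d τ '' B) := by
    rw [← P.transl_inv _ τ, image_union, image_preimage_eq A (bijective_translCyl τ).surjective]
  rw [hunion, ← P.transl_inv B τ]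
  exact P.submodular _ _

/- Competitors `A ∩ (B + c)` for `A` and `(A - c) ∪ B` for `B`: by submodularity the perimeters
cancel, and only the two integrals over the excess `(A - c) \ B` remain. -/
lemma IsMinimizer.volume_preimage_translCyl_sdiff_eq_zero {P : GenPerimeter d} {R h c : ℝ}
    {E E' A B : Set (Cyl d)} (hA : IsMinimizer d P R h E A) (hB : IsMinimizer d P R h E' B)
    (hh : 0 < h) (hc : 0 ≤ c) (hPA : P.P A ≠ ⊤) (hPB : P.P B ≠ ⊤)
    (hlt : ∀ x, sdist d E' x < sdist d E (translCyl d (0, c) x)) :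
    volume (translCyl d (0, c) ⁻¹' A \ B) = 0 := by
  set T := translCyl d (0, c)
  have hT : MeasurableEmbedding T := measurableEmbedding_translCyl (0, c)
  have hsub : P.P (T ⁻¹' A ∪ B) + P.P (A ∩ T '' B) ≤ P.P A + P.P B :=
    P.preimage_union_add_inter_image_le (0, c) A B
  have hPAB : P.P A + P.P B ≠ ⊤ := ENNReal.add_ne_top.2 ⟨hPA, hPB⟩
  obtain ⟨hPunion, hPinter⟩ := ENNReal.add_ne_top.1 (ne_top_of_le_ne_top hPAB hsub)
  have hTA : T ⁻¹' A ⊆ {x | x.2 < R} := fun x hx ↦ by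
    have : x.2 + c < R := hA.1.2.2 hx
    exact (le_add_of_nonneg_right hc).trans_lt this
  have hTB : {x | x.2 < -R} ⊆ T '' B := fun x hx ↦ by
    refine ⟨(x.1, x.2 - c), hB.1.2.1 ((sub_le_self _ hc).trans_lt hx), ?_⟩
    exact (translCyl_vertical_apply c _).trans (by rw [sub_add_cancel])
  have hA_le := hA.toReal_add_setIntegral_le_inter (hT.measurableSet_image.2 hB.1.1) hTB hPA hPinter
  have hB_le := hB.toReal_le_union_add_setIntegral (hT.measurable hA.1.1) hTA hPB hPunion
  have hexcess : ∫ x in A \ T '' B, sdist d E x = ∫ x in T ⁻¹' A \ B, sdist d E (T x) := by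
    rw [← (measurePreserving_translCyl (0, c)).setIntegral_preimage_emb hT, preimage_sdiff,
      preimage_image_eq B hT.injective]
  have hsub_real := ENNReal.toReal_mono hPAB hsub
  rw [ENNReal.toReal_add hPunion hPinter, ENNReal.toReal_add hPA hPB] at hsub_real
  have hint : IntegrableOn (fun x ↦ sdist d E (T x)) (T ⁻¹' A \ B) :=
    integrableOn_sdiff ((continuous_sdist E).comp (isometry_translCyl _).continuous) hTA hB.1.2.1
  refine measure_eq_zero_of_setIntegral_le
    (integrableOn_sdiff (continuous_sdist E') hTA hB.1.2.1) hint hlt ?_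
  refine le_of_mul_le_mul_left ?_ (one_div_pos.2 hh)
  rw [hexcess] at hA_le
  linarith

/-! ### Convergence in measure and uniform convergence of Lipschitz subgraphs -/

lemma measurableSet_subgraph {g : Torus d → ℝ} (hg : Continuous g) :
    MeasurableSet (subgraph d g) :=
  (isClosed_le continuous_snd (hg.comp continuous_fst)).measurableSet

lemma preimage_mk_symmDiff_subgraph (f g : Torus d → ℝ) (y : Torus d) :
    Prod.mk y ⁻¹' symmDiff (subgraph d f) (subgraph d g) = uIoc (g y) (f y) := by
  ext t
  simp only [mem_preimage, mem_symmDiff, subgraph, mem_ofPred_eq, mem_uIoc, not_le]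
  tauto

lemma volume_symmDiff_subgraph_le (f g : C(Torus d, ℝ)) :
    volume (symmDiff (subgraph d f) (subgraph d g)) ≤ ENNReal.ofReal (dist f g) := by
  rw [Measure.volume_eq_prod, Measure.prod_apply
    ((measurableSet_subgraph f.continuous).symmDiff (measurableSet_subgraph g.continuous))]
  calc ∫⁻ y, volume (Prod.mk y ⁻¹' symmDiff (subgraph d f) (subgraph d g))
      ≤ ∫⁻ _ : Torus d, ENNReal.ofReal (dist f g) := by
        refine lintegral_mono fun y ↦ ?_
        rw [preimage_mk_symmDiff_subgraph, Real.volume_uIoc]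
        exact ENNReal.ofReal_le_ofReal (ContinuousMap.dist_apply_le_dist (f := f) (g := g) y)
    _ = ENNReal.ofReal (dist f g) := by
        have : IsProbabilityMeasure (volume : Measure (AddCircle (1 : ℝ))) :=
          ⟨UnitAddCircle.measure_univ⟩
        simp

lemma exists_ball_subset_symmDiff_subgraph {K : NNReal} {f g : C(Torus d, ℝ)}
    (hf : LipschitzWith K f) (hg : LipschitzWith K g) {ε : ℝ} (hε : 0 ≤ ε) (hfg : ε < dist f g) :
    ∃ p : Cyl d, Metric.ball p (ε / (4 * (1 + K))) ⊆
      symmDiff (subgraph d f) (subgraph d g) ∩ {x | ε / 2 ≤ |height g x|} := by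
  obtain ⟨y, hy⟩ : ∃ y, ε < |f y - g y| := by
    by_contra! hle
    exact hfg.not_ge ((ContinuousMap.dist_le hε).2 hle)
  have hheight : ∀ {u : Torus d → ℝ} {p x : Cyl d}, LipschitzWith K u →
      x ∈ Metric.ball p (ε / (4 * (1 + K))) → |height u x - height u p| < ε / 4 := by
    intro u p x hu hx
    calc |height u x - height u p| ≤ (1 + K) * dist x p := abs_height_sub_height_le hu x p
      _ < (1 + K) * (ε / (4 * (1 + K))) := by gcongr; exact hx
      _ = ε / 4 := by field_simp
  rcases lt_abs.1 hy with hgf | hfg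
  · refine ⟨(y, f y - ε / 4), fun x hx ↦ ?_⟩
    have hxf := abs_lt.1 (hheight hf hx)
    have hxg := abs_lt.1 (hheight hg hx)
    simp only [height] at hxf hxg
    refine ⟨Or.inl ⟨?_, ?_⟩, (le_abs.2 (Or.inl ?_) : ε / 2 ≤ |height g x|)⟩
    · rw [mem_subgraph_iff_height, height]; linarith
    · rw [notMem_subgraph_iff_height, height]; linarith
    · rw [height]; linarith
  · refine ⟨(y, f y + ε / 4), fun x hx ↦ ?_⟩
    have hxf := abs_lt.1 (hheight hf hx)
    have hxg := abs_lt.1 (hheight hg hx)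
    simp only [height] at hxf hxg
    refine ⟨Or.inr ⟨?_, ?_⟩, (le_abs.2 (Or.inr ?_) : ε / 2 ≤ |height g x|)⟩
    · rw [mem_subgraph_iff_height, height]; linarith
    · rw [notMem_subgraph_iff_height, height]; linarith
    · rw [height]; linarith

lemma volume_ball_le_of_lt_dist {K : NNReal} {f g : C(Torus d, ℝ)} (hf : LipschitzWith K f)
    (hg : LipschitzWith K g) {ε : ℝ} (hε : 0 ≤ ε) (hfg : ε < dist f g) :
    volume (Metric.ball (0 : Cyl d) (ε / (4 * (1 + K)))) ≤
      volume (symmDiff (subgraph d f) (subgraph d g) ∩ {x | ε / 2 ≤ |height g x|}) := by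
  obtain ⟨p, hp⟩ := exists_ball_subset_symmDiff_subgraph hf hg hε hfg
  exact (Measure.addHaar_ball_center volume p _).symm.trans_le (measure_mono hp)

lemma tendsto_dist_zero_of_eventually_le {ι X : Type*} [PseudoMetricSpace X] {l : Filter ι}
    {f g : ι → X} (h : ∀ ε > 0, ∀ᶠ k in l, dist (f k) (g k) ≤ ε) :
    Tendsto (fun k ↦ dist (f k) (g k)) l (nhds 0) := by
  refine Metric.tendsto_nhds.2 fun ε hε ↦ ?_
  filter_upwards [h (ε / 2) (half_pos hε)] with k hk
  rw [Real.dist_0_eq_abs, abs_of_nonneg dist_nonneg]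
  linarith

lemma tendsto_volume_symmDiff_subgraph_iff {ι : Type*} {l : Filter ι} {K : NNReal}
    {f g : ι → C(Torus d, ℝ)} (hf : ∀ k, LipschitzWith K (f k)) (hg : ∀ k, LipschitzWith K (g k)) :
    Tendsto (fun k ↦ volume (symmDiff (subgraph d (f k)) (subgraph d (g k)))) l (nhds 0) ↔
      Tendsto (fun k ↦ dist (f k) (g k)) l (nhds 0) := by
  refine ⟨fun hvol ↦ tendsto_dist_zero_of_eventually_le fun ε hε ↦ ?_, fun hdist ↦ ?_⟩
  · have hball : 0 < volume (Metric.ball (0 : Cyl d) (ε / (4 * (1 + K)))) :=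
      Metric.measure_ball_pos _ _ (by positivity)
    filter_upwards [hvol.eventually_lt_const hball] with k hk
    by_contra! hlt
    exact hk.not_ge ((volume_ball_le_of_lt_dist (hf k) (hg k) hε.le hlt).trans
      (measure_mono inter_subset_left))
  · refine tendsto_of_tendsto_of_tendsto_of_le_of_le tendsto_const_nhds ?_ (fun _ ↦ zero_le)
      fun k ↦ volume_symmDiff_subgraph_le (f k) (g k)
    simpa using ENNReal.tendsto_ofReal hdist

/-! ### Contraction of the minimization step -/

lemma le_of_volume_subgraph_sdiff_eq_zero {f g : Torus d → ℝ} (hf : Continuous f)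
    (hg : Continuous g) (hfg : volume (subgraph d f \ subgraph d g) = 0) (y : Torus d) :
    f y ≤ g y := by
  by_contra! hlt
  have hopen : IsOpen {x : Cyl d | g x.1 < x.2 ∧ x.2 < f x.1} :=
    (isOpen_lt (hg.comp continuous_fst) continuous_snd).inter
      (isOpen_lt continuous_snd (hf.comp continuous_fst))
  obtain ⟨t, ht⟩ := exists_between hlt
  refine (hopen.measure_pos volume ⟨(y, t), ht⟩).ne' (measure_mono_null (fun x hx ↦ ?_) hfg)
  exact ⟨hx.2.le, not_le.2 hx.1⟩

lemma GenPerimeter.subgraph_ne_top (P : GenPerimeter d) {L : ℝ} (hL : 0 < L) {g : Torus d → ℝ}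
    (hg : LipschitzWith L.toNNReal g) : P.P (subgraph d g) ≠ ⊤ :=
  (P.lip_finite L hL _ ⟨g, hg, rfl⟩).ne

section Step

variable {P : GenPerimeter d} {L R h : ℝ} {a b g g' : C(Torus d, ℝ)}

lemma IsMinimizer.le_add_of_le_add (hL : 0 < L) (hh : 0 < h)
    (hga : IsMinimizer d P R h (subgraph d g) (subgraph d a))
    (hgb : IsMinimizer d P R h (subgraph d g') (subgraph d b)) (ha : LipschitzWith L.toNNReal a)
    (hb : LipschitzWith L.toNNReal b) (hg' : LipschitzWith L.toNNReal g') {ε : ℝ} (hε : 0 ≤ ε)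
    (hle : ∀ y, g y ≤ g' y + ε) (y : Torus d) : a y ≤ b y + ε := by
  refine le_of_forall_pos_le_add fun δ hδ ↦ ?_
  have hlt : ∀ x, sdist d (subgraph d g') x <
      sdist d (subgraph d g) (translCyl d (0, ε + δ) x) := fun x ↦ by
    rw [← sdist_preimage_translCyl, preimage_translCyl_subgraph]
    refine (lt_add_of_pos_right _ (by positivity)).trans_le
      (sdist_subgraph_add_le hg' hδ.le (fun z ↦ ?_) x)
    linarith [hle z]
  have hnull := hga.volume_preimage_translCyl_sdiff_eq_zero hgb hh (by positivity)
    (P.subgraph_ne_top hL ha) (P.subgraph_ne_top hL hb) hlt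
  rw [preimage_translCyl_subgraph] at hnull
  have := le_of_volume_subgraph_sdiff_eq_zero (by fun_prop) b.continuous hnull y
  linarith

lemma IsMinimizer.dist_le_dist (hL : 0 < L) (hh : 0 < h)
    (hga : IsMinimizer d P R h (subgraph d g) (subgraph d a))
    (hgb : IsMinimizer d P R h (subgraph d g') (subgraph d b)) (ha : LipschitzWith L.toNNReal a)
    (hb : LipschitzWith L.toNNReal b) (hg : LipschitzWith L.toNNReal g)
    (hg' : LipschitzWith L.toNNReal g') : dist a b ≤ dist g g' := by
  have hdist z : |g z - g' z| ≤ dist g g' := ContinuousMap.dist_apply_le_dist (f := g) (g := g') z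
  refine (ContinuousMap.dist_le dist_nonneg).2 fun y ↦ abs_sub_le_iff.2 ⟨?_, ?_⟩
  · exact sub_le_iff_le_add'.2 <| hga.le_add_of_le_add hL hh hgb ha hb hg' dist_nonneg
      (fun z ↦ sub_le_iff_le_add'.1 (abs_sub_le_iff.1 (hdist z)).1) y
  · exact sub_le_iff_le_add'.2 <| hgb.le_add_of_le_add hL hh hga hb ha hg dist_nonneg
      (fun z ↦ sub_le_iff_le_add'.1 (abs_sub_le_iff.1 (hdist z)).2) y

lemma IsMinimizer.mul_volume_ball_le (hL : 0 < L) (hh : 0 < h) (hgR : subgraph d g ∈ MR d R)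
    (hga : IsMinimizer d P R h (subgraph d g) (subgraph d a)) (ha : LipschitzWith L.toNNReal a)
    (hg : LipschitzWith L.toNNReal g) {ε : ℝ} (hε : 0 ≤ ε) (hag : ε < dist a g) :
    ε / (2 * (1 + L.toNNReal)) *
        volume.real (Metric.ball (0 : Cyl d) (ε / (4 * (1 + L.toNNReal)))) ≤
      h * (P.P (subgraph d g)).toReal := by
  set D := symmDiff (subgraph d a) (subgraph d g)
  set S := {x | ε / (2 * (1 + L.toNNReal)) ≤ |sdist d (subgraph d g) x|}
  have habs := (continuous_sdist (subgraph d g)).abs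
  have hint : IntegrableOn (fun x ↦ |sdist d (subgraph d g) x|) D :=
    (integrableOn_sdiff habs hga.1.2.2 hgR.2.1).union (integrableOn_sdiff habs hgR.2.2 hga.1.2.1)
  have hS : MeasurableSet S := (isClosed_le continuous_const habs).measurableSet
  have hheight : {x | ε / 2 ≤ |height g x|} ⊆ S := fun x hx ↦ by
    rw [mem_ofPred_eq] at hx
    rw [mem_ofPred_eq, ← div_div, div_le_iff₀' (by positivity)]
    exact hx.trans (abs_height_le_mul_abs_sdist hg x)
  have hball : volume (Metric.ball (0 : Cyl d) (ε / (4 * (1 + L.toNNReal)))) ≤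
      (volume.restrict D) S := by
    rw [Measure.restrict_apply hS, inter_comm]
    exact (volume_ball_le_of_lt_dist ha hg hε hag).trans (measure_mono (by gcongr))
  have hfin : (volume.restrict D) S ≠ ⊤ := by
    refine ne_top_of_le_ne_top ENNReal.ofReal_ne_top
      (le_trans ?_ (volume_symmDiff_subgraph_le a g))
    exact (measure_mono (subset_univ S)).trans_eq (Measure.restrict_apply_univ D)
  calc _ ≤ ε / (2 * (1 + L.toNNReal)) * (volume.restrict D).real S := by
        gcongr
        exact ENNReal.toReal_mono hfin hball
    _ ≤ ∫ x in D, |sdist d (subgraph d g) x| :=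
        mul_meas_ge_le_integral_of_nonneg (Eventually.of_forall fun _ ↦ abs_nonneg _) hint _
    _ ≤ h * (P.P (subgraph d g)).toReal :=
        hga.setIntegral_abs_sdist_le hh hgR (P.subgraph_ne_top hL ha) (P.subgraph_ne_top hL hg)

lemma tendsto_dist_zero_of_isMinimizer {ι : Type*} {l : Filter ι} {hk : ι → ℝ}
    {a : ι → C(Torus d, ℝ)} (hL : 0 < L) (hkpos : ∀ k, 0 < hk k) (hkto : Tendsto hk l (nhds 0))
    (hgR : subgraph d g ∈ MR d R) (hg : LipschitzWith L.toNNReal g)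
    (hmin : ∀ k, IsMinimizer d P R (hk k) (subgraph d g) (subgraph d (a k)))
    (ha : ∀ k, LipschitzWith L.toNNReal (a k)) :
    Tendsto (fun k ↦ dist (a k) g) l (nhds 0) := by
  refine tendsto_dist_zero_of_eventually_le fun ε hε ↦ ?_
  have hpos : 0 < ε / (2 * (1 + L.toNNReal)) *
      volume.real (Metric.ball (0 : Cyl d) (ε / (4 * (1 + L.toNNReal)))) :=
    mul_pos (by positivity) (ENNReal.toReal_pos (Metric.measure_ball_pos _ _ (by positivity)).ne'
      measure_ball_lt_top.ne)
  have hto : Tendsto (fun k ↦ hk k * (P.P (subgraph d g)).toReal) l (nhds 0) := by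
    simpa using hkto.mul_const (P.P (subgraph d g)).toReal
  filter_upwards [hto.eventually_lt_const hpos] with k hlt
  by_contra! hdist
  exact hlt.not_ge ((hmin k).mul_volume_ball_le hL (hkpos k) hgR (ha k) hg hε.le hdist)

end Step

/-! ### Discrete flows of graphs -/

/-- The approximate flat solutions of `IsApproxFlow`, recorded by the functions `e n` whose
subgraphs are the sets at the times `n h`, so that they can be compared in the sup distance. -/
def IsGraphFlow (P : GenPerimeter d) (L R h : ℝ) (e : ℕ → C(Torus d, ℝ)) : Prop :=
  ∀ n, LipschitzWith L.toNNReal (e n) ∧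
    IsMinimizer d P R h (subgraph d (e n)) (subgraph d (e (n + 1)))

lemma exists_continuousMap_of_mem_lipClass {L : ℝ} {E : Set (Cyl d)} (hE : E ∈ LipClass d L) :
    ∃ g : C(Torus d, ℝ), LipschitzWith L.toNNReal g ∧ E = subgraph d g :=
  let ⟨g, hg, hEg⟩ := hE
  ⟨⟨g, hg.continuous⟩, hg, hEg⟩

lemma subgraph_injective : Function.Injective (subgraph d) := fun _ _ hfg ↦
  funext fun y ↦ eq_of_forall_le_iff fun t ↦ Set.ext_iff.1 hfg (y, t)

lemma IsApproxFlow.exists_isGraphFlow {P : GenPerimeter d} {L R h : ℝ} {g₀ : C(Torus d, ℝ)}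
    {Eh : ℕ → Set (Cyl d)} (hEh : IsApproxFlow d P L R h (subgraph d g₀) Eh)
    (hg₀ : LipschitzWith L.toNNReal g₀) :
    ∃ e, IsGraphFlow P L R h e ∧ e 0 = g₀ ∧ ∀ n, Eh n = subgraph d (e n) := by
  have hlip : ∀ n, Eh n ∈ LipClass d L
    | 0 => ⟨g₀, hg₀, hEh.1⟩
    | n + 1 => (hEh.2 n).1
  choose e he hEe using fun n ↦ exists_continuousMap_of_mem_lipClass (hlip n)
  refine ⟨e, fun n ↦ ⟨he n, hEe n ▸ hEe (n + 1) ▸ (hEh.2 n).2⟩, ?_, hEe⟩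
  exact DFunLike.coe_injective (subgraph_injective ((hEe 0).symm.trans hEh.1))

lemma floor_add_eq_or {α : Type*} [Semiring α] [LinearOrder α] [FloorSemiring α]
    [IsStrictOrderedRing α] {a b : α} (ha : 0 ≤ a) (hb : 0 ≤ b) :
    ⌊a + b⌋₊ = ⌊a⌋₊ + ⌊b⌋₊ ∨ ⌊a + b⌋₊ = ⌊a⌋₊ + ⌊b⌋₊ + 1 := by
  have hle : ⌊a⌋₊ + ⌊b⌋₊ ≤ ⌊a + b⌋₊ := Nat.le_floor <| by
    rw [Nat.cast_add]
    exact add_le_add (Nat.floor_le ha) (Nat.floor_le hb)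
  have hlt : ⌊a + b⌋₊ < (⌊a⌋₊ + 1) + (⌊b⌋₊ + 1) := by
    rw [Nat.floor_lt (add_nonneg ha hb)]
    exact_mod_cast add_lt_add (Nat.lt_floor_add_one a) (Nat.lt_floor_add_one b)
  lia

namespace IsGraphFlow

variable {P : GenPerimeter d} {L R h : ℝ} {e f : ℕ → C(Torus d, ℝ)}

lemma dist_add_le (hL : 0 < L) (hh : 0 < h) (he : IsGraphFlow P L R h e)
    (hf : IsGraphFlow P L R h f) (m n : ℕ) : dist (e (m + n)) (f n) ≤ dist (e m) (f 0) := by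
  induction n with
  | zero => rfl
  | succ n ih =>
    exact ((he (m + n)).2.dist_le_dist hL hh (hf n).2 (he (m + n + 1)).1 (hf (n + 1)).1
      (he (m + n)).1 (hf n).1).trans ih

lemma dist_succ_le (hL : 0 < L) (hh : 0 < h) (he : IsGraphFlow P L R h e) (n : ℕ) :
    dist (e (n + 1)) (e n) ≤ dist (e 1) (e 0) :=
  add_comm n 1 ▸ he.dist_add_le hL hh he 1 n

lemma dist_floor_add_le (hL : 0 < L) (hh : 0 < h) (he : IsGraphFlow P L R h e)
    (hf : IsGraphFlow P L R h f) {s t : ℝ} (hs : 0 ≤ s) (ht : 0 ≤ t) :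
    dist (f ⌊t / h⌋₊) (e ⌊(s + t) / h⌋₊) ≤ dist (e ⌊s / h⌋₊) (f 0) + dist (e 1) (e 0) := by
  have hcontr : dist (f ⌊t / h⌋₊) (e (⌊s / h⌋₊ + ⌊t / h⌋₊)) ≤ dist (e ⌊s / h⌋₊) (f 0) :=
    dist_comm (e _) (f _) ▸ he.dist_add_le hL hh hf _ _
  rw [add_div]
  rcases floor_add_eq_or (div_nonneg hs hh.le) (div_nonneg ht hh.le) with hfloor | hfloor <;>
    rw [hfloor]
  · linarith [dist_nonneg (x := e 1) (y := e 0)]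
  · refine (dist_triangle_right _ _ (e (⌊s / h⌋₊ + ⌊t / h⌋₊))).trans ?_
    exact add_le_add hcontr (he.dist_succ_le hL hh _)

end IsGraphFlow

/-- The semigroup property of the flat flow: the approximate flat solutions with initial
datum `E0 t̄` converge at time `Δt` to `E0 (t̄ + Δt)`. -/
theorem flatFlow_semigroup (d : ℕ) (hd : 2 ≤ d) (P : GenPerimeter d) (L R : ℝ)
    (hL : 0 < L) (hR : 0 < R) (E₀ : Set (Cyl d)) (hE₀ : E₀ ∈ LipClass d L ∩ MR d R)
    (hk : ℕ → ℝ) (hkpos : ∀ k, 0 < hk k) (hkto : Tendsto hk atTop (nhds 0))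
    (Eflow : ℕ → ℕ → Set (Cyl d)) (E0 : ℝ → Set (Cyl d))
    (hFF : IsFlatFlow d P L R hk E₀ Eflow E0)
    (tb Δt : ℝ) (htb : 0 ≤ tb) (hΔt : 0 ≤ Δt)
    (F : ℕ → ℕ → Set (Cyl d)) (hF : ∀ k, IsApproxFlow d P L R (hk k) (E0 tb) (F k)) :
    Tendsto (fun k => volume (symmDiff (F k ⌊Δt / hk k⌋₊) (E0 (tb + Δt)))) atTop (nhds 0) := by
  obtain ⟨-, hE0_lip, hEflow, hconv⟩ := hFF
  obtain ⟨g₀, hg₀, rfl⟩ := exists_continuousMap_of_mem_lipClass hE₀.1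
  obtain ⟨g, hg, hE0_g⟩ := exists_continuousMap_of_mem_lipClass (hE0_lip tb htb)
  obtain ⟨u, hu, hE0_u⟩ := exists_continuousMap_of_mem_lipClass (hE0_lip _ (add_nonneg htb hΔt))
  simp only [hE0_g] at hF
  choose e he he_zero hEe using fun k ↦ (hEflow k).exists_isGraphFlow hg₀
  choose f hf hf_zero hFf using fun k ↦ (hF k).exists_isGraphFlow hg
  simp only [hEe, hFf, hE0_u] at hconv ⊢
  have hg_to : Tendsto (fun k ↦ dist (e k ⌊tb / hk k⌋₊) g) atTop (nhds 0) :=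
    (tendsto_volume_symmDiff_subgraph_iff (fun k ↦ (he k _).1) fun _ ↦ hg).1
      (hE0_g ▸ hconv tb htb)
  have hu_to : Tendsto (fun k ↦ dist (e k ⌊(tb + Δt) / hk k⌋₊) u) atTop (nhds 0) :=
    (tendsto_volume_symmDiff_subgraph_iff (fun k ↦ (he k _).1) fun _ ↦ hu).1
      (hE0_u ▸ hconv _ (add_nonneg htb hΔt))
  have hstep_to : Tendsto (fun k ↦ dist (e k 1) g₀) atTop (nhds 0) :=
    tendsto_dist_zero_of_isMinimizer hL hkpos hkto hE₀.2 hg₀ (fun k ↦ he_zero k ▸ (he k 0).2)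
      fun k ↦ (he k 1).1
  refine (tendsto_volume_symmDiff_subgraph_iff (fun k ↦ (hf k _).1) fun _ ↦ hu).2 <|
    squeeze_zero (fun _ ↦ dist_nonneg) (fun k ↦ ?_)
      (by simpa using (hg_to.add hstep_to).add hu_to)
  grw [dist_triangle _ (e k ⌊(tb + Δt) / hk k⌋₊) u,
    (he k).dist_floor_add_le hL (hkpos k) (hf k) htb hΔt, hf_zero, he_zero]
end
end

section
/- Let K : 𝕋^{d−1} × ℝ → [0,+∞) be measurable and suppose there exist p > 2, s ∈ (0,1) and γ > 0 such that K(ξ) ≤ γ |ξ_d|^{−p} whenever |ξ_d| ≥ 1 and K(ξ) ≤ γ ‖ξ‖_♯^{−(d+s)} whenever |ξ_d| < 1. Then the nonlocal perimeter 𝒫_K(E) := ∫_E ∫_{E^c} K(x−y) dy dx is a generalized perimeter, i.e. it satisfies properties (i)–(vi). -/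
open MeasureTheory Filter Set
open scoped ENNReal

noncomputable section

/-- The periodic norm `‖ξ‖_♯ = (|ξ_d|² + min_{z'∈ℤ^{d-1}} |ξ̃' + z'|²)^{1/2}`. -/
def pnorm (d : ℕ) (ξ : Cyl d) : ℝ := Real.sqrt (ξ.2 ^ 2 + ∑ i, ‖ξ.1 i‖ ^ 2)

/-- The nonlocal perimeter governed by a kernel `K`:
`𝒫_K(E) = ∫_E ∫_{Eᶜ} K(x - y) dy dx`. -/
def PK (d : ℕ) (K : Cyl d → ℝ) (E : Set (Cyl d)) : ℝ≥0∞ :=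
  ∫⁻ x in E, ∫⁻ y in Eᶜ, ENNReal.ofReal (K (x - y)) ∂volume ∂volume

/-!
The kernel defines a measure `ν` on pairs of points with `𝒫_K(E) = ν (E × Eᶜ)`. Submodularity is
then an inclusion of rectangles. For lower semicontinuity, truncate the kernel to be bounded and
supported in a slab: the truncated interaction of `E` with `Eᶜ` differs from that of `Eₙ` by at most
a multiple of `|(Eₙ Δ E) ∩ 𝕊_R|`, and `ν` is the supremum of its truncations.

For the finiteness on an `L`-Lipschitz subgraph `E`, put `ξ = x - y`. The set of `y ∉ E` with
`ξ + y ∈ E` has measure at most `(L + 1) ‖ξ‖`, so `𝒫_K(E) ≤ (L + 1) ∫ K(ξ) ‖ξ‖ dξ`, and it remains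
to see that the first moment of `K` is finite. Where `|ξ_d| ≥ 1` the integrand is at most
`γ |ξ_d|^(1-p)`, with `p - 1 > 1`. Where `|ξ_d| < 1` it is at most `γ ‖ξ‖^(-(d-1+s))`, which is
dominated by the product of the one-dimensional singularities `|ξ_i|^(-a)` with
`a = (d-1+s)/d < 1`.
-/

section NonlocalPerimeter

variable {α : Type*} [MeasurableSpace α] {μ : Measure α} {κ : α × α → ℝ≥0∞}

/-- The nonlocal perimeter of `E` for a kernel `κ` on pairs of points of a measure space: the total
interaction between `E` and its complement. -/
def nonlocalPerimeter (μ : Measure α) (κ : α × α → ℝ≥0∞) (E : Set α) : ℝ≥0∞ :=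
  ∫⁻ x in E, ∫⁻ y in Eᶜ, κ (x, y) ∂μ ∂μ

/-- The measure on pairs of points with density `κ`, whose value on `A ×ˢ B` is the interaction
between `A` and `B`. It turns estimates of nonlocal perimeters into set inclusions. -/
def interactionMeasure (μ : Measure α) (κ : α × α → ℝ≥0∞) : Measure (α × α) :=
  (μ.prod μ).withDensity κ

@[simp]
lemma nonlocalPerimeter_empty : nonlocalPerimeter μ κ ∅ = 0 := by
  simp [nonlocalPerimeter]

@[simp]
lemma nonlocalPerimeter_univ : nonlocalPerimeter μ κ univ = 0 := by
  simp [nonlocalPerimeter]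

lemma nonlocalPerimeter_congr_ae {E F : Set α} (h : E =ᵐ[μ] F) :
    nonlocalPerimeter μ κ E = nonlocalPerimeter μ κ F := by
  unfold nonlocalPerimeter
  rw [Measure.restrict_congr_set h, Measure.restrict_congr_set h.compl]

lemma nonlocalPerimeter_image (e : α ≃ᵐ α) (he : MeasurePreserving e μ μ)
    (hκ : ∀ x y, κ (e x, e y) = κ (x, y)) (E : Set α) :
    nonlocalPerimeter μ κ (e '' E) = nonlocalPerimeter μ κ E := by
  unfold nonlocalPerimeter
  rw [← image_compl_eq e.bijective, ← he.setLIntegral_comp_emb e.measurableEmbedding]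
  simp_rw [← he.setLIntegral_comp_emb e.measurableEmbedding, hκ]

variable [SFinite μ]

lemma nonlocalPerimeter_eq_interactionMeasure (hκ : Measurable κ) (E : Set α) :
    nonlocalPerimeter μ κ E = interactionMeasure μ κ (E ×ˢ Eᶜ) := by
  rw [interactionMeasure, withDensity_apply', ← Measure.prod_restrict,
    lintegral_prod _ hκ.aemeasurable, nonlocalPerimeter]

lemma interactionMeasure_toMeasurable_prod (A B : Set α) :
    interactionMeasure μ κ (toMeasurable μ A ×ˢ toMeasurable μ B) =
      interactionMeasure μ κ (A ×ˢ B) := by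
  simp only [interactionMeasure, withDensity_apply', ← Measure.prod_restrict,
    Measure.restrict_toMeasurable_of_sFinite]

lemma measure_union_prod_inter_add_inter_prod_union_le {β : Type*} [MeasurableSpace β]
    (ν : Measure (α × β)) {A A' : Set α} {B B' : Set β} (hA : MeasurableSet A)
    (hA' : MeasurableSet A') (hB : MeasurableSet B) (hB' : MeasurableSet B') :
    ν ((A ∪ A') ×ˢ (B ∩ B')) + ν ((A ∩ A') ×ˢ (B ∪ B')) ≤ ν (A ×ˢ B) + ν (A' ×ˢ B') := by
  rw [← measure_union_add_inter _ ((hA.inter hA').prod (hB.union hB')),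
    ← measure_union_add_inter _ (hA'.prod hB')]
  exact add_le_add (measure_mono (by grind)) (measure_mono (by grind))

-- `E` and `Eᶜ` are enlarged to measurable hulls separately: the inequality for rectangles does not
-- need the two factors to be complementary.
lemma nonlocalPerimeter_union_add_inter_le (hκ : Measurable κ) (E F : Set α) :
    nonlocalPerimeter μ κ (E ∪ F) + nonlocalPerimeter μ κ (E ∩ F) ≤
      nonlocalPerimeter μ κ E + nonlocalPerimeter μ κ F := by
  simp only [nonlocalPerimeter_eq_interactionMeasure hκ, compl_union, compl_inter]
  rw [← interactionMeasure_toMeasurable_prod E, ← interactionMeasure_toMeasurable_prod F]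
  refine le_trans ?_ (measure_union_prod_inter_add_inter_prod_union_le _
    (measurableSet_toMeasurable μ E) (measurableSet_toMeasurable μ F)
    (measurableSet_toMeasurable μ Eᶜ) (measurableSet_toMeasurable μ Fᶜ))
  gcongr <;> exact subset_toMeasurable μ _

end NonlocalPerimeter

section LowerSemicontinuity

variable {α : Type*} {κ : α × α → ℝ≥0∞} {S : ℕ → Set α}

/-- The kernel `κ` cut off at height `m` and outside `S m ×ˢ S m`. Along an exhaustion `S` by sets
of finite measure these bounded kernels increase to `κ`. -/
def truncatedKernel (S : ℕ → Set α) (κ : α × α → ℝ≥0∞) (m : ℕ) : α × α → ℝ≥0∞ :=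
  (S m ×ˢ S m).indicator fun z => min (κ z) m

lemma truncatedKernel_le (m : ℕ) : truncatedKernel S κ m ≤ κ :=
  indicator_le' (fun _ _ => min_le_left _ _) fun _ _ => zero_le

lemma monotone_truncatedKernel (hS : Monotone S) : Monotone (truncatedKernel S κ) := by
  intro m n hmn z
  calc truncatedKernel S κ m z
      ≤ (S n ×ˢ S n).indicator (fun z => min (κ z) m) z :=
        indicator_le_indicator_of_subset (prod_mono (hS hmn) (hS hmn)) (fun _ => zero_le) z
    _ ≤ truncatedKernel S κ n z := indicator_le_indicator (by gcongr)

lemma iSup_truncatedKernel (hS : Monotone S) (hS_univ : ⋃ m, S m = univ) (z : α × α) :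
    ⨆ m, truncatedKernel S κ m z = κ z := by
  obtain ⟨i, hi⟩ := mem_iUnion.mp (hS_univ ▸ mem_univ z.1)
  obtain ⟨j, hj⟩ := mem_iUnion.mp (hS_univ ▸ mem_univ z.2)
  refine le_antisymm (iSup_le fun m => truncatedKernel_le m z) (le_of_forall_lt fun c hc => ?_)
  obtain ⟨n, hn⟩ := ENNReal.exists_nat_gt hc.ne_top
  set m := max n (max i j)
  have hz : z ∈ S m ×ˢ S m := ⟨hS (by grind) hi, hS (by grind) hj⟩
  have hcm : c < m := hn.trans_le (by gcongr; exact le_max_left _ _)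
  exact lt_iSup_iff.mpr ⟨m, by simp [truncatedKernel, hz, hc, hcm]⟩

lemma prod_compl_subset_prod_compl_union (E F : Set α) :
    E ×ˢ Eᶜ ⊆ F ×ˢ Fᶜ ∪ (symmDiff F E ×ˢ univ ∪ univ ×ˢ symmDiff F E) := by
  rintro ⟨x, y⟩ ⟨hx, hy⟩
  by_cases hxF : x ∈ F <;> by_cases hyF : y ∈ F <;> simp_all [mem_symmDiff]

variable [MeasurableSpace α]

lemma measurable_truncatedKernel (hκ : Measurable κ) (hS : ∀ m, MeasurableSet (S m)) (m : ℕ) :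
    Measurable (truncatedKernel S κ m) :=
  (hκ.min measurable_const).indicator ((hS m).prod (hS m))

variable {μ : Measure α} [SFinite μ]

lemma iSup_interactionMeasure_truncatedKernel (hκ : Measurable κ) (hS : ∀ m, MeasurableSet (S m))
    (hS_mono : Monotone S) (hS_univ : ⋃ m, S m = univ) (A : Set (α × α)) :
    ⨆ m, interactionMeasure μ (truncatedKernel S κ m) A = interactionMeasure μ κ A := by
  simp only [interactionMeasure, withDensity_apply']
  rw [← lintegral_iSup (measurable_truncatedKernel hκ hS) (monotone_truncatedKernel hS_mono)]
  simp only [iSup_truncatedKernel hS_mono hS_univ]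

lemma interactionMeasure_truncatedKernel_prod_le (hS : ∀ m, MeasurableSet (S m)) (m : ℕ)
    (A B : Set α) :
    interactionMeasure μ (truncatedKernel S κ m) (A ×ˢ B) ≤
      m * (μ (A ∩ S m) * μ (B ∩ S m)) := by
  rw [interactionMeasure, withDensity_apply', truncatedKernel,
    setLIntegral_indicator ((hS m).prod (hS m)), inter_comm, prod_inter_prod]
  calc ∫⁻ z in (A ∩ S m) ×ˢ (B ∩ S m), min (κ z) m ∂μ.prod μ
      ≤ ∫⁻ _ in (A ∩ S m) ×ˢ (B ∩ S m), m ∂μ.prod μ := by gcongr; exact min_le_right _ _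
    _ = m * (μ (A ∩ S m) * μ (B ∩ S m)) := by rw [setLIntegral_const, Measure.prod_prod]

lemma interactionMeasure_truncatedKernel_prod_compl_le (hκ : Measurable κ)
    (hS : ∀ m, MeasurableSet (S m)) (m : ℕ) (E F : Set α) :
    interactionMeasure μ (truncatedKernel S κ m) (E ×ˢ Eᶜ) ≤
      nonlocalPerimeter μ κ F + 2 * (m * μ (S m)) * μ (symmDiff F E ∩ S m) := by
  set ν := interactionMeasure μ (truncatedKernel S κ m)
  set D := symmDiff F E
  have h_perimeter : ν (F ×ˢ Fᶜ) ≤ nonlocalPerimeter μ κ F := by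
    rw [nonlocalPerimeter_eq_interactionMeasure hκ]
    exact withDensity_mono (ae_of_all _ (truncatedKernel_le m)) _
  have h_left : ν (D ×ˢ univ) ≤ m * (μ (D ∩ S m) * μ (S m)) := by
    simpa only [univ_inter] using interactionMeasure_truncatedKernel_prod_le hS m D univ
  have h_right : ν (univ ×ˢ D) ≤ m * (μ (S m) * μ (D ∩ S m)) := by
    simpa only [univ_inter] using interactionMeasure_truncatedKernel_prod_le hS m univ D
  calc ν (E ×ˢ Eᶜ)
      ≤ ν (F ×ˢ Fᶜ) + (ν (D ×ˢ univ) + ν (univ ×ˢ D)) :=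
        (measure_mono (prod_compl_subset_prod_compl_union E F)).trans
          ((measure_union_le _ _).trans (by gcongr; exact measure_union_le _ _))
    _ ≤ nonlocalPerimeter μ κ F +
          (m * (μ (D ∩ S m) * μ (S m)) + m * (μ (S m) * μ (D ∩ S m))) := by gcongr
    _ = nonlocalPerimeter μ κ F + 2 * (m * μ (S m)) * μ (D ∩ S m) := by ring

lemma nonlocalPerimeter_le_liminf (hκ : Measurable κ) (hS : ∀ m, MeasurableSet (S m))
    (hS_mono : Monotone S) (hS_univ : ⋃ m, S m = univ) (hS_fin : ∀ m, μ (S m) ≠ ⊤)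
    {ι : Type*} {l : Filter ι} {F : ι → Set α} {E : Set α}
    (hF : ∀ m, Tendsto (fun i => μ (symmDiff (F i) E ∩ S m)) l (nhds 0)) :
    nonlocalPerimeter μ κ E ≤ liminf (fun i => nonlocalPerimeter μ κ (F i)) l := by
  rw [nonlocalPerimeter_eq_interactionMeasure hκ,
    ← iSup_interactionMeasure_truncatedKernel hκ hS hS_mono hS_univ]
  refine iSup_le fun m => ?_
  have h_error : Tendsto (fun i => 2 * (m * μ (S m)) * μ (symmDiff (F i) E ∩ S m)) l (nhds 0) := by
    have h_const : 2 * (m * μ (S m)) ≠ ⊤ := by finiteness [hS_fin m]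
    simpa only [mul_zero] using ENNReal.Tendsto.const_mul (hF m) (Or.inr h_const)
  rw [← ENNReal.liminf_add_of_right_tendsto_zero h_error]
  refine le_liminf_of_le (by isBoundedDefault) (Eventually.of_forall fun i => ?_)
  exact interactionMeasure_truncatedKernel_prod_compl_le hκ hS m E (F i)

end LowerSemicontinuity

section TranslationInvariantKernel

variable {G : Type*} [MeasurableSpace G] [AddGroup G] {μ : Measure G} [μ.IsAddRightInvariant]
  {k : G → ℝ≥0∞}

lemma nonlocalPerimeter_image_addRight [MeasurableAdd G] (t : G) (E : Set G) :
    nonlocalPerimeter μ (fun z => k (z.1 - z.2)) (MeasurableEquiv.addRight t '' E) =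
      nonlocalPerimeter μ (fun z => k (z.1 - z.2)) E :=
  nonlocalPerimeter_image _ (measurePreserving_add_right μ t) (by simp) E

lemma nonlocalPerimeter_eq_lintegral_mul_measure [MeasurableAdd₂ G] [MeasurableNeg G]
    [SFinite μ] (hk : Measurable k) {E : Set G} (hE : MeasurableSet E) :
    nonlocalPerimeter μ (fun z => k (z.1 - z.2)) E =
      ∫⁻ ξ, k ξ * μ ((ξ + ·) ⁻¹' E \ E) ∂μ := by
  have hE_add : MeasurableSet ((fun z : G × G => z.2 + z.1) ⁻¹' E) :=
    (measurable_snd.add measurable_fst) hE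
  calc nonlocalPerimeter μ (fun z => k (z.1 - z.2)) E
      = ∫⁻ y in Eᶜ, ∫⁻ x in E, k (x - y) ∂μ ∂μ :=
        lintegral_lintegral_swap (hk.comp (measurable_fst.sub measurable_snd)).aemeasurable
    _ = ∫⁻ y in Eᶜ, ∫⁻ ξ, ((fun z : G × G => z.2 + z.1) ⁻¹' E).indicator (fun z => k z.2) (y, ξ)
          ∂μ ∂μ := by
        refine lintegral_congr fun y => ?_
        rw [← lintegral_indicator hE, ← lintegral_add_right_eq_self (E.indicator _) y]
        refine lintegral_congr fun ξ => ?_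
        by_cases hξ : ξ + y ∈ E <;> simp [hξ]
    _ = ∫⁻ ξ, ∫⁻ y in Eᶜ, ((ξ + ·) ⁻¹' E).indicator (fun _ => k ξ) y ∂μ ∂μ :=
        lintegral_lintegral_swap ((hk.comp measurable_snd).indicator hE_add).aemeasurable
    _ = ∫⁻ ξ, k ξ * μ ((ξ + ·) ⁻¹' E \ E) ∂μ := by
        refine lintegral_congr fun ξ => ?_
        have hE_shift : MeasurableSet ((ξ + ·) ⁻¹' E) := (measurable_const_add ξ) hE
        rw [lintegral_indicator_const hE_shift, Measure.restrict_apply hE_shift, Set.sdiff_eq]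

end TranslationInvariantKernel

section LipschitzSubgraph

variable {X : Type*} [SeminormedAddCommGroup X] {C : NNReal} {g : X → ℝ}

-- Membership in `Ioc` says that `(x, t)` lies above the graph of `g` and `ξ + (x, t)` below it.
lemma volume_Ioc_subgraph_translate_le (hg : LipschitzWith C g) (ξ : X × ℝ) (x : X) :
    volume (Ioc (g x) (g (ξ.1 + x) - ξ.2)) ≤ (C + 1) * ‖ξ‖ₑ := by
  have h_lip : g (ξ.1 + x) - g x ≤ C * ‖ξ.1‖ := by
    simpa [Real.dist_eq, dist_eq_norm] using
      (le_abs_self _).trans (hg.dist_le_mul (ξ.1 + x) x)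
  have h_length : g (ξ.1 + x) - ξ.2 - g x ≤ (C + 1) * ‖ξ‖ :=
    calc g (ξ.1 + x) - ξ.2 - g x ≤ C * ‖ξ.1‖ + ‖ξ.2‖ := by
          linarith [neg_le_abs ξ.2, Real.norm_eq_abs ξ.2]
      _ ≤ C * ‖ξ‖ + ‖ξ‖ := by gcongr; exacts [norm_fst_le ξ, norm_snd_le ξ]
      _ = (C + 1) * ‖ξ‖ := by ring
  calc volume (Ioc (g x) (g (ξ.1 + x) - ξ.2))
      ≤ ENNReal.ofReal ((C + 1) * ‖ξ‖) := by
        rw [Real.volume_Ioc]; exact ENNReal.ofReal_le_ofReal h_length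
    _ = (C + 1) * ‖ξ‖ₑ := by
        rw [ENNReal.ofReal_mul (by positivity), ofReal_norm,
          ENNReal.ofReal_add C.coe_nonneg zero_le_one, ENNReal.ofReal_coe_nnreal,
          ENNReal.ofReal_one]

variable [MeasurableSpace X] [BorelSpace X]

lemma measurableSet_subgraph_of_lipschitzWith (hg : LipschitzWith C g) :
    MeasurableSet {x : X × ℝ | x.2 ≤ g x.1} :=
  measurableSet_le measurable_snd (hg.continuous.measurable.comp measurable_fst)

lemma measure_subgraph_translate_diff_le (hg : LipschitzWith C g) (ν : Measure X)
    (ξ : X × ℝ) :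
    ν.prod volume ((ξ + ·) ⁻¹' {x : X × ℝ | x.2 ≤ g x.1} \ {x | x.2 ≤ g x.1}) ≤
      (C + 1) * ‖ξ‖ₑ * ν univ := by
  have hE := measurableSet_subgraph_of_lipschitzWith hg
  rw [Measure.prod_apply ((measurable_const_add ξ hE).diff hE)]
  calc ∫⁻ x, volume (Prod.mk x ⁻¹'
          ((ξ + ·) ⁻¹' {x : X × ℝ | x.2 ≤ g x.1} \ {x | x.2 ≤ g x.1})) ∂ν
      ≤ ∫⁻ _, (C + 1) * ‖ξ‖ₑ ∂ν := by
        refine lintegral_mono fun x => ?_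
        refine (measure_mono ?_).trans (volume_Ioc_subgraph_translate_le hg ξ x)
        rintro t ⟨h_below, h_above⟩
        exact ⟨not_le.mp h_above, le_sub_iff_add_le'.mpr h_below⟩
    _ = (C + 1) * ‖ξ‖ₑ * ν univ := lintegral_const _

variable [SecondCountableTopology X]

lemma nonlocalPerimeter_subgraph_le (hg : LipschitzWith C g)
    {ν : Measure X} [SFinite ν] [ν.IsAddLeftInvariant] {k : X × ℝ → ℝ≥0∞} (hk : Measurable k) :
    nonlocalPerimeter (ν.prod volume) (fun z => k (z.1 - z.2)) {x | x.2 ≤ g x.1} ≤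
      (C + 1) * ν univ * ∫⁻ ξ, k ξ * ‖ξ‖ₑ ∂ν.prod volume := by
  rw [nonlocalPerimeter_eq_lintegral_mul_measure hk (measurableSet_subgraph_of_lipschitzWith hg)]
  calc _ ≤ ∫⁻ ξ, k ξ * ((C + 1) * ‖ξ‖ₑ * ν univ) ∂ν.prod volume := by
        gcongr with ξ; exact measure_subgraph_translate_diff_le hg ν ξ
    _ = ∫⁻ ξ, (C + 1) * ν univ * (k ξ * ‖ξ‖ₑ) ∂ν.prod volume := by
        congr with ξ; ring
    _ = (C + 1) * ν univ * ∫⁻ ξ, k ξ * ‖ξ‖ₑ ∂ν.prod volume :=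
        lintegral_const_mul _ (by fun_prop)

end LipschitzSubgraph

section NormPowers

lemma lintegral_pi_fin_prod_eq_prod {n : ℕ} {X : Fin n → Type*} [∀ i, MeasurableSpace (X i)]
    (μ : ∀ i, Measure (X i)) [∀ i, SigmaFinite (μ i)] {f : ∀ i, X i → ℝ≥0∞}
    (hf : ∀ i, Measurable (f i)) :
    ∫⁻ x, ∏ i, f i (x i) ∂Measure.pi μ = ∏ i, ∫⁻ x, f i x ∂μ i := by
  induction n with
  | zero => simp
  | succ n ih =>
    rw [← (measurePreserving_piFinSuccAbove μ 0).symm.lintegral_comp_emb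
      (MeasurableEquiv.measurableEmbedding _)]
    simp_rw [MeasurableEquiv.piFinSuccAbove_symm_apply, Fin.insertNthEquiv, Fin.prod_univ_succ,
      Fin.insertNth_zero]
    simp only [Fin.zero_succAbove]
    have h_tail : Measurable fun x : ∀ i : Fin n, X i.succ => ∏ i, f i.succ (x i) := by
      fun_prop
    rw [← ih (fun i => μ i.succ) fun i => hf i.succ]
    exact lintegral_prod_mul (ν := Measure.pi fun i => μ i.succ) (hf 0).aemeasurable
      h_tail.aemeasurable

lemma ennreal_rpow_neg_le_rpow_neg {a b : ℝ≥0∞} (hab : a ≤ b) {z : ℝ} (hz : 0 ≤ z) :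
    b ^ (-z) ≤ a ^ (-z) := by
  simpa only [ENNReal.rpow_neg] using ENNReal.inv_le_inv.mpr (ENNReal.rpow_le_rpow hab hz)

lemma enorm_rpow_neg_mul_self_le {X : Type*} [SeminormedAddGroup X] (x : X) (z : ℝ) :
    ‖x‖ₑ ^ (-z) * ‖x‖ₑ ≤ ‖x‖ₑ ^ (-(z - 1)) := by
  rcases eq_or_ne ‖x‖ₑ 0 with hx | hx
  · simp [hx]
  · rw [neg_sub', sub_neg_eq_add, ENNReal.rpow_add _ _ hx enorm_ne_top, ENNReal.rpow_one]

lemma enorm_rpow_neg_le_prod {ι X Y : Type*} [Fintype ι] [SeminormedAddGroup X]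
    [SeminormedAddGroup Y] {a : ℝ} (ha : 0 ≤ a) (ξ : (ι → X) × Y) :
    ‖ξ‖ₑ ^ (-((Fintype.card ι + 1) * a)) ≤ (∏ i, ‖ξ.1 i‖ₑ ^ (-a)) * ‖ξ.2‖ₑ ^ (-a) := by
  have h_fst (i : ι) : ‖ξ.1 i‖ₑ ≤ ‖ξ‖ₑ :=
    enorm_le_iff_norm_le.mpr ((norm_le_pi_norm ξ.1 i).trans (norm_fst_le ξ))
  have h_snd : ‖ξ.2‖ₑ ≤ ‖ξ‖ₑ := enorm_le_iff_norm_le.mpr (norm_snd_le ξ)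
  calc ‖ξ‖ₑ ^ (-((Fintype.card ι + 1) * a))
      = (∏ _i : ι, ‖ξ‖ₑ ^ (-a)) * ‖ξ‖ₑ ^ (-a) := by
        rw [Finset.prod_const, Finset.card_univ, ← pow_succ, ← ENNReal.rpow_natCast,
          ← ENNReal.rpow_mul]
        congr 1; push_cast; ring
    _ ≤ (∏ i, ‖ξ.1 i‖ₑ ^ (-a)) * ‖ξ.2‖ₑ ^ (-a) :=
        mul_le_mul' (Finset.prod_le_prod' fun i _ => ennreal_rpow_neg_le_rpow_neg (h_fst i) ha)
          (ennreal_rpow_neg_le_rpow_neg h_snd ha)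

lemma enorm_rpow_neg_le_mul_one_add_norm_rpow_neg {X : Type*} [SeminormedAddGroup X] {a r : ℝ}
    (hr : 0 < r) (ha : 0 ≤ a) {x : X} (hx : r ≤ ‖x‖) :
    ‖x‖ₑ ^ (-a) ≤ ENNReal.ofReal ((1 + r⁻¹) ^ a) * ENNReal.ofReal ((1 + ‖x‖) ^ (-a)) := by
  have hx_pos : 0 < ‖x‖ := hr.trans_le hx
  have h_shift : 1 + ‖x‖ ≤ (1 + r⁻¹) * ‖x‖ := by
    linarith [(one_le_inv_mul₀ hr).mpr hx]
  rw [← ofReal_norm, ENNReal.ofReal_rpow_of_pos hx_pos, ← ENNReal.ofReal_mul (by positivity)]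
  refine ENNReal.ofReal_le_ofReal ?_
  calc ‖x‖ ^ (-a) = (1 + r⁻¹) ^ a * ((1 + r⁻¹) * ‖x‖) ^ (-a) := by
        rw [Real.mul_rpow (by positivity) hx_pos.le, ← mul_assoc, ← Real.rpow_add (by positivity),
          add_neg_cancel, Real.rpow_zero, one_mul]
    _ ≤ (1 + r⁻¹) ^ a * (1 + ‖x‖) ^ (-a) := by
        gcongr ?_ * ?_
        exact Real.rpow_le_rpow_of_nonpos (by positivity) h_shift (neg_nonpos.mpr ha)

section FiniteDimensional

variable {V : Type*} [NormedAddCommGroup V] [NormedSpace ℝ V] [FiniteDimensional ℝ V]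
  [MeasurableSpace V] [BorelSpace V] (μ : Measure V) [μ.IsAddHaarMeasure] {a r : ℝ}

lemma setLIntegral_ball_enorm_rpow_neg_lt_top [Nontrivial V] (ha : a < Module.finrank ℝ V) :
    ∫⁻ x in Metric.ball 0 r, ‖x‖ₑ ^ (-a) ∂μ < ⊤ := by
  have h_int : IntegrableOn (fun x : V => ‖x‖ ^ (-a)) (Metric.ball 0 r) μ :=
    integrableOn_ball_of_norm_le_rpow (C := 1) Module.finrank_pos ha
      (Eventually.of_forall fun x => by
        rw [one_mul, Real.norm_of_nonneg (by positivity)])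
      (Measurable.aestronglyMeasurable (by fun_prop))
  refine lt_of_eq_of_lt (lintegral_congr_ae (ae_restrict_of_ae ?_)) h_int.hasFiniteIntegral
  filter_upwards [Measure.ae_ne μ 0] with x hx
  rw [← ofReal_norm, ENNReal.ofReal_rpow_of_pos (norm_pos_iff.mpr hx),
    Real.enorm_of_nonneg (by positivity)]

lemma setLIntegral_compl_ball_enorm_rpow_neg_lt_top (hr : 0 < r) (ha : Module.finrank ℝ V < a) :
    ∫⁻ x in (Metric.ball 0 r)ᶜ, ‖x‖ₑ ^ (-a) ∂μ < ⊤ := by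
  have ha_pos : 0 < a := (Nat.cast_nonneg _).trans_lt ha
  set c := ENNReal.ofReal ((1 + r⁻¹) ^ a)
  calc ∫⁻ x in (Metric.ball 0 r)ᶜ, ‖x‖ₑ ^ (-a) ∂μ
      ≤ ∫⁻ x in (Metric.ball 0 r)ᶜ, c * ENNReal.ofReal ((1 + ‖x‖) ^ (-a)) ∂μ :=
        setLIntegral_mono' measurableSet_ball.compl fun x hx =>
          enorm_rpow_neg_le_mul_one_add_norm_rpow_neg hr ha_pos.le (by simpa using hx)
    _ ≤ ∫⁻ x, c * ENNReal.ofReal ((1 + ‖x‖) ^ (-a)) ∂μ := setLIntegral_le_lintegral _ _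
    _ = c * ∫⁻ x, ENNReal.ofReal ((1 + ‖x‖) ^ (-a)) ∂μ :=
        lintegral_const_mul' _ _ ENNReal.ofReal_ne_top
    _ < ⊤ := ENNReal.mul_lt_top ENNReal.ofReal_lt_top (finite_integral_one_add_norm ha)

end FiniteDimensional

variable {T a : ℝ} [hT : Fact (0 < T)]

lemma lintegral_addCircle_enorm_rpow_neg_lt_top (ha : a < 1) :
    ∫⁻ t : AddCircle T, ‖t‖ₑ ^ (-a) < ⊤ := by
  have hT_pos : 0 < T := hT.out
  have h_norm : ∀ t ∈ Ioc (-T / 2) (-T / 2 + T), ‖(t : AddCircle T)‖ₑ = ‖t‖ₑ := by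
    intro t ht
    rw [enorm_eq_iff_norm_eq, Real.norm_eq_abs, AddCircle.norm_coe_eq_abs_iff _ hT_pos.ne', abs_le,
      abs_of_pos hT_pos]
    constructor <;> linarith [ht.1, ht.2]
  calc ∫⁻ t : AddCircle T, ‖t‖ₑ ^ (-a)
      = ∫⁻ t in Ioc (-T / 2) (-T / 2 + T), ‖t‖ₑ ^ (-a) := by
        rw [← AddCircle.lintegral_preimage T (-T / 2)]
        exact setLIntegral_congr_fun measurableSet_Ioc fun t ht => by simp only [h_norm t ht]
    _ ≤ ∫⁻ t in Metric.ball (0 : ℝ) T, ‖t‖ₑ ^ (-a) := by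
        refine lintegral_mono_set fun t ht => ?_
        rw [Real.ball_eq_Ioo]
        constructor <;> linarith [ht.1, ht.2]
    _ < ⊤ := setLIntegral_ball_enorm_rpow_neg_lt_top volume (by simpa using ha)

variable {n : ℕ}

lemma setLIntegral_univ_prod_ball_enorm_rpow_neg_lt_top {r : ℝ} (ha : 0 ≤ a) (han : a < n + 1) :
    ∫⁻ ξ : (Fin n → AddCircle T) × ℝ in univ ×ˢ Metric.ball 0 r, ‖ξ‖ₑ ^ (-a) < ⊤ := by
  set b := a / (n + 1)
  have hb : 0 ≤ b := by positivity
  have hb_one : b < 1 := (div_lt_one (by positivity)).mpr han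
  have h_torus : ∫⁻ x : Fin n → AddCircle T, ∏ i, ‖x i‖ₑ ^ (-b) < ⊤ := by
    rw [volume_pi, lintegral_pi_fin_prod_eq_prod (f := fun _ t => ‖t‖ₑ ^ (-b)) _ (by fun_prop)]
    exact ENNReal.prod_lt_top fun _ _ => lintegral_addCircle_enorm_rpow_neg_lt_top hb_one
  calc ∫⁻ ξ : (Fin n → AddCircle T) × ℝ in univ ×ˢ Metric.ball 0 r, ‖ξ‖ₑ ^ (-a)
      ≤ ∫⁻ ξ : (Fin n → AddCircle T) × ℝ in univ ×ˢ Metric.ball 0 r,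
          (∏ i, ‖ξ.1 i‖ₑ ^ (-b)) * ‖ξ.2‖ₑ ^ (-b) := by
        gcongr with ξ
        have hab : a = (Fintype.card (Fin n) + 1) * b := by
          rw [Fintype.card_fin, mul_div_cancel₀ _ (by positivity)]
        rw [hab]
        exact enorm_rpow_neg_le_prod hb ξ
    _ = (∫⁻ x : Fin n → AddCircle T, ∏ i, ‖x i‖ₑ ^ (-b)) *
          ∫⁻ t in Metric.ball (0 : ℝ) r, ‖t‖ₑ ^ (-b) := by
        rw [Measure.volume_eq_prod, ← Measure.prod_restrict, Measure.restrict_univ]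
        exact lintegral_prod_mul (f := fun x : Fin n → AddCircle T => ∏ i, ‖x i‖ₑ ^ (-b))
          (g := fun t : ℝ => ‖t‖ₑ ^ (-b)) (Measurable.aemeasurable (by fun_prop)) (by fun_prop)
    _ < ⊤ := ENNReal.mul_lt_top h_torus
        (setLIntegral_ball_enorm_rpow_neg_lt_top volume (by simpa using hb_one))

lemma setLIntegral_univ_prod_compl_ball_enorm_snd_rpow_neg_lt_top {X : Type*} [MeasurableSpace X]
    (ν : Measure X) [IsFiniteMeasure ν] {r : ℝ} (hr : 0 < r) (ha : 1 < a) :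
    ∫⁻ ξ in univ ×ˢ (Metric.ball 0 r)ᶜ, ‖ξ.2‖ₑ ^ (-a) ∂ν.prod (volume : Measure ℝ) < ⊤ := by
  rw [← Measure.prod_restrict, Measure.restrict_univ, lintegral_prod _ (by fun_prop)]
  simp only [lintegral_const]
  exact ENNReal.mul_lt_top
    (setLIntegral_compl_ball_enorm_rpow_neg_lt_top volume hr (by simpa using ha))
    (measure_lt_top ν univ)

lemma pi_addCircle_norm_le_half_period {ι : Type*} [Fintype ι] (x : ι → AddCircle T) :
    ‖x‖ ≤ T / 2 := by
  refine (pi_norm_le_iff_of_nonneg (by linarith [hT.out])).mpr fun i => ?_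
  simpa only [abs_of_pos hT.out] using AddCircle.norm_le_half_period T hT.out.ne'

lemma lintegral_mul_enorm_lt_top_of_decay {k : (Fin n → AddCircle T) × ℝ → ℝ≥0∞} {c : ℝ≥0∞}
    {p q r : ℝ} (hc : c ≠ ⊤) (hr : T / 2 ≤ r) (hp : 2 < p) (hq : 1 ≤ q) (hqn : q < n + 2)
    (hk_far : ∀ ξ, r ≤ |ξ.2| → k ξ ≤ c * ‖ξ.2‖ₑ ^ (-p))
    (hk_near : ∀ ξ, |ξ.2| < r → k ξ ≤ c * ‖ξ‖ₑ ^ (-q)) :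
    ∫⁻ ξ, k ξ * ‖ξ‖ₑ < ⊤ := by
  have hr_pos : 0 < r := (half_pos hT.out).trans_le hr
  set N : Set ((Fin n → AddCircle T) × ℝ) := univ ×ˢ Metric.ball 0 r
  have hN : MeasurableSet N := MeasurableSet.univ.prod measurableSet_ball
  have hN_compl : Nᶜ = univ ×ˢ (Metric.ball 0 r)ᶜ := by simp [N, univ_prod, preimage_compl]
  have h_near : ∀ ξ ∈ N, k ξ * ‖ξ‖ₑ ≤ c * ‖ξ‖ₑ ^ (-(q - 1)) := fun ξ hξ =>
    calc k ξ * ‖ξ‖ₑ ≤ c * ‖ξ‖ₑ ^ (-q) * ‖ξ‖ₑ := by gcongr; exact hk_near ξ (by simpa [N] using hξ)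
      _ ≤ c * ‖ξ‖ₑ ^ (-(q - 1)) := by
        rw [mul_assoc]; gcongr; exact enorm_rpow_neg_mul_self_le ξ q
  have h_far : ∀ ξ ∈ Nᶜ, k ξ * ‖ξ‖ₑ ≤ c * ‖ξ.2‖ₑ ^ (-(p - 1)) := fun ξ hξ => by
    have hrξ : r ≤ |ξ.2| := by simpa [N] using hξ
    have h_enorm : ‖ξ‖ₑ ≤ ‖ξ.2‖ₑ := enorm_le_iff_norm_le.mpr <|
      max_le ((pi_addCircle_norm_le_half_period ξ.1).trans (hr.trans hrξ)) le_rfl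
    calc k ξ * ‖ξ‖ₑ ≤ c * ‖ξ.2‖ₑ ^ (-p) * ‖ξ.2‖ₑ := by gcongr; exact hk_far ξ hrξ
      _ ≤ c * ‖ξ.2‖ₑ ^ (-(p - 1)) := by
        rw [mul_assoc]; gcongr; exact enorm_rpow_neg_mul_self_le ξ.2 p
  rw [← lintegral_add_compl _ hN, ENNReal.add_lt_top]
  constructor
  · refine (setLIntegral_mono' hN h_near).trans_lt ?_
    rw [lintegral_const_mul' _ _ hc]
    exact ENNReal.mul_lt_top hc.lt_top
      (setLIntegral_univ_prod_ball_enorm_rpow_neg_lt_top (by linarith) (by linarith))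
  · refine (setLIntegral_mono' hN.compl h_far).trans_lt ?_
    rw [lintegral_const_mul' _ _ hc, hN_compl]
    exact ENNReal.mul_lt_top hc.lt_top
      (setLIntegral_univ_prod_compl_ball_enorm_snd_rpow_neg_lt_top volume hr_pos (by linarith))

end NormPowers

section Cylinder

variable {d : ℕ}

instance isAddRightInvariant_volume_cyl : (volume : Measure (Cyl d)).IsAddRightInvariant :=
  Measure.prod.instIsAddRightInvariant

lemma slabR_eq_univ_prod_Ioo (R : ℝ) : SlabR d R = univ ×ˢ Ioo (-R) R := by
  ext; simp [SlabR]

lemma measurableSet_slabR (R : ℝ) : MeasurableSet (SlabR d R) := by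
  rw [slabR_eq_univ_prod_Ioo]; exact MeasurableSet.univ.prod measurableSet_Ioo

lemma volume_slabR_ne_top (R : ℝ) : volume (SlabR d R) ≠ ⊤ := by
  rw [slabR_eq_univ_prod_Ioo, Measure.volume_eq_prod, Measure.prod_prod, Real.volume_Ioo]
  finiteness

lemma monotone_slabR : Monotone (SlabR d) :=
  fun _ _ hRR' _ hx => ⟨(neg_le_neg hRR').trans_lt hx.1, hx.2.trans_le hRR'⟩

lemma iUnion_slabR_natCast_add_one : ⋃ m : ℕ, SlabR d (m + 1) = univ := by
  refine eq_univ_of_forall fun x => mem_iUnion.mpr ?_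
  obtain ⟨m, hm⟩ := exists_nat_gt |x.2|
  exact ⟨m, abs_lt.mp (hm.trans (lt_add_one _))⟩

lemma norm_le_pnorm (ξ : Cyl d) : ‖ξ‖ ≤ pnorm d ξ := by
  have h_sum : 0 ≤ ∑ i, ‖ξ.1 i‖ ^ 2 := by positivity
  refine max_le ((pi_norm_le_iff_of_nonneg (Real.sqrt_nonneg _)).mpr fun i => ?_) ?_
  · have h_term : ‖ξ.1 i‖ ^ 2 ≤ ∑ i, ‖ξ.1 i‖ ^ 2 :=
      Finset.single_le_sum (fun i _ => sq_nonneg ‖ξ.1 i‖) (Finset.mem_univ i)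
    exact Real.le_sqrt_of_sq_le (by linarith [sq_nonneg ξ.2])
  · exact Real.le_sqrt_of_sq_le (by rw [Real.norm_eq_abs, sq_abs]; linarith)

lemma lintegral_ofReal_mul_enorm_lt_top_of_decay (hd : d ≠ 0) {K : Cyl d → ℝ} {p s γ : ℝ}
    (hp : 2 < p) (hs : s ∈ Ico (0 : ℝ) 1)
    (hK_far : ∀ ξ : Cyl d, 1 ≤ |ξ.2| → K ξ ≤ γ / |ξ.2| ^ p)
    (hK_near : ∀ ξ : Cyl d, |ξ.2| < 1 →
      ENNReal.ofReal (K ξ) ≤ ENNReal.ofReal γ / ENNReal.ofReal (pnorm d ξ) ^ ((d : ℝ) + s)) :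
    ∫⁻ ξ, ENNReal.ofReal (K ξ) * ‖ξ‖ₑ < ⊤ := by
  have hd_one : (1 : ℝ) ≤ d := by exact_mod_cast Nat.one_le_iff_ne_zero.mpr hd
  refine lintegral_mul_enorm_lt_top_of_decay (c := ENNReal.ofReal γ) (p := p) (q := d + s) (r := 1)
    ENNReal.ofReal_ne_top (by norm_num) hp (by linarith [hs.1]) ?_ (fun ξ hξ => ?_) fun ξ hξ => ?_
  · rw [Nat.cast_pred (Nat.pos_of_ne_zero hd)]
    linarith [hs.2]
  · have hξ_pos : 0 < |ξ.2| := one_pos.trans_le hξ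
    calc ENNReal.ofReal (K ξ) ≤ ENNReal.ofReal (γ / |ξ.2| ^ p) :=
          ENNReal.ofReal_le_ofReal (hK_far ξ hξ)
      _ = ENNReal.ofReal γ * ‖ξ.2‖ₑ ^ (-p) := by
          rw [div_eq_mul_inv, ← Real.rpow_neg hξ_pos.le, ENNReal.ofReal_mul' (by positivity),
            ← ENNReal.ofReal_rpow_of_pos hξ_pos, ← Real.norm_eq_abs, ofReal_norm]
  · refine (hK_near ξ hξ).trans ?_
    rw [div_eq_mul_inv, ← ENNReal.rpow_neg]
    refine mul_le_mul_right (ennreal_rpow_neg_le_rpow_neg ?_ (by linarith [hs.1])) _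
    rw [← ofReal_norm]
    exact ENNReal.ofReal_le_ofReal (norm_le_pnorm ξ)

end Cylinder

theorem PK_is_generalized_perimeter_general (d : ℕ) {k : Cyl d → ℝ≥0∞} (hk : Measurable k)
    (hk_fin : ∫⁻ ξ, k ξ * ‖ξ‖ₑ < ⊤) :
    ∃ P : GenPerimeter d, P.P = nonlocalPerimeter volume fun z => k (z.1 - z.2) := by
  have hκ : Measurable fun z : Cyl d × Cyl d => k (z.1 - z.2) := by fun_prop
  refine ⟨{
    P := nonlocalPerimeter volume fun z => k (z.1 - z.2)
    lip_finite := ?_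
    empty_eq := nonlocalPerimeter_empty
    univ_eq := nonlocalPerimeter_univ
    congr_ae := fun E F hEF => nonlocalPerimeter_congr_ae (measure_symmDiff_eq_zero_iff.mp hEF)
    lsc := fun F E hF => nonlocalPerimeter_le_liminf hκ (fun m : ℕ => measurableSet_slabR (m + 1))
      (fun m n hmn => monotone_slabR (by gcongr)) iUnion_slabR_natCast_add_one
      (fun m => volume_slabR_ne_top _) fun m => hF (m + 1) (by positivity)
    submodular := nonlocalPerimeter_union_add_inter_le hκ
    transl_inv := fun E τ =>
      nonlocalPerimeter_image_addRight (fun i => (τ.1 i : AddCircle (1 : ℝ)), τ.2) E }, rfl⟩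
  rintro L - _ ⟨g, hg, rfl⟩
  exact (nonlocalPerimeter_subgraph_le hg hk).trans_lt (ENNReal.mul_lt_top (by finiteness) hk_fin)

/-- Under the decay assumptions on the kernel, `𝒫_K` is a generalized perimeter,
i.e. it satisfies properties (i)-(vi). -/
theorem PK_is_generalized_perimeter (d : ℕ) (hd : 2 ≤ d) (K : Cyl d → ℝ)
    (hKmeas : Measurable K) (hKnn : ∀ ξ, 0 ≤ K ξ)
    (p s γ : ℝ) (hp : 2 < p) (hs : s ∈ Set.Ioo (0:ℝ) 1) (hγ : 0 < γ)
    (hK1 : ∀ ξ : Cyl d, 1 ≤ |ξ.2| → K ξ ≤ γ / |ξ.2| ^ p)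
    (hK2 : ∀ ξ : Cyl d, |ξ.2| < 1 →
      ENNReal.ofReal (K ξ) ≤
        ENNReal.ofReal γ / (ENNReal.ofReal (pnorm d ξ)) ^ ((d : ℝ) + s)) :
    ∃ P : GenPerimeter d, P.P = PK d K :=
  PK_is_generalized_perimeter_general d hKmeas.ennreal_ofReal
    (lintegral_ofReal_mul_enorm_lt_top_of_decay (by omega) hp (Ioo_subset_Ico_self hs) hK1 hK2)
end
end
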